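/- arXiv:0810.2570 — 2 statements merged into one kernel-verified Lean document; each statement's English description precedes it below -/
import Mathlib

section
/- Let n ≥ 1 and let Q and Q′ be real normal defining functions of dimension n, defining real analytic hypersurfaces M and M′ through 0 with complexifications ℳ and ℳ′. Assume M′ is of finite type at 0, i.e. (z,χ) ↦ Q′(z,χ,0) does not vanish identically on any neighborhood of 0. Let ℋ = (f,g,f̃,g̃) be an HSPM sending (ℳ,0) into (ℳ′,0). If ℋ is totally Segre nondegenerate at 0, then ℋ is Segre transversal to ℳ′ at 0, i.e. ∂g/∂w(0,0) ≠ 0. -/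
open Filter Topology Complex

namespace HSPMpaper

variable {n : ℕ}

/-- Partial derivative of `F` in the `i`-th coordinate direction. -/
noncomputable def pd (i : Fin n) (F : (Fin n → ℂ) → ℂ) : (Fin n → ℂ) → ℂ :=
  fun z => fderiv ℂ F z (Pi.single i 1)

/-- Iterated partial derivative `∂^α` for a multi-index `α`. -/
noncomputable def mpd (α : Fin n → ℕ) (F : (Fin n → ℂ) → ℂ) : (Fin n → ℂ) → ℂ :=
  ((List.ofFn fun i : Fin n => (pd i)^[α i]).foldr (· ∘ ·) id) F

/-- Componentwise complex conjugation on `ℂⁿ`. -/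
def conjV (z : Fin n → ℂ) : Fin n → ℂ := fun i => starRingEnd ℂ (z i)

/-- The conjugate defining function `Q̄(χ,z,τ) = conj (Q (conj χ) (conj z) (conj τ))`. -/
def QBar (Q : (Fin n → ℂ) → (Fin n → ℂ) → ℂ → ℂ) : (Fin n → ℂ) → (Fin n → ℂ) → ℂ → ℂ :=
  fun χ z τ => starRingEnd ℂ (Q (conjV χ) (conjV z) (starRingEnd ℂ τ))

/-- `Q` is a normal defining function (of dimension `n`): holomorphic near the origin of
`ℂⁿ × ℂⁿ × ℂ` and satisfying `Q(0,χ,τ) = τ` and `Q(z,0,τ) = τ` near `0`. -/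
def IsNormalDF (Q : (Fin n → ℂ) → (Fin n → ℂ) → ℂ → ℂ) : Prop :=
  (∀ᶠ p in 𝓝 (0 : (Fin n → ℂ) × (Fin n → ℂ) × ℂ),
      AnalyticAt ℂ (fun q : (Fin n → ℂ) × (Fin n → ℂ) × ℂ => Q q.1 q.2.1 q.2.2) p) ∧
  (∀ᶠ p in 𝓝 (0 : (Fin n → ℂ) × (Fin n → ℂ) × ℂ),
      Q 0 p.2.1 p.2.2 = p.2.2 ∧ Q p.1 0 p.2.2 = p.2.2)

/-- `Q` is a real normal defining function: normal and `Q(z,χ,Q̄(χ,z,w)) = w` near `0`. -/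
def IsRealNormalDF (Q : (Fin n → ℂ) → (Fin n → ℂ) → ℂ → ℂ) : Prop :=
  IsNormalDF Q ∧
  ∀ᶠ p in 𝓝 (0 : (Fin n → ℂ) × (Fin n → ℂ) × ℂ),
    Q p.1 p.2.1 (QBar Q p.2.1 p.1 p.2.2) = p.2.2

/-- `(f,g,f̃,g̃)` is a holomorphic Segre preserving map sending `(ℳ,0)` into `(ℳ',0)`. -/
def IsHSPM (Q Q' : (Fin n → ℂ) → (Fin n → ℂ) → ℂ → ℂ)
    (f : (Fin n → ℂ) → ℂ → Fin n → ℂ) (g : (Fin n → ℂ) → ℂ → ℂ)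
    (ft : (Fin n → ℂ) → ℂ → Fin n → ℂ) (gt : (Fin n → ℂ) → ℂ → ℂ) : Prop :=
  (∀ᶠ p in 𝓝 (0 : (Fin n → ℂ) × ℂ), AnalyticAt ℂ (fun q : (Fin n → ℂ) × ℂ => f q.1 q.2) p) ∧
  (∀ᶠ p in 𝓝 (0 : (Fin n → ℂ) × ℂ), AnalyticAt ℂ (fun q : (Fin n → ℂ) × ℂ => g q.1 q.2) p) ∧
  (∀ᶠ p in 𝓝 (0 : (Fin n → ℂ) × ℂ), AnalyticAt ℂ (fun q : (Fin n → ℂ) × ℂ => ft q.1 q.2) p) ∧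
  (∀ᶠ p in 𝓝 (0 : (Fin n → ℂ) × ℂ), AnalyticAt ℂ (fun q : (Fin n → ℂ) × ℂ => gt q.1 q.2) p) ∧
  f 0 0 = 0 ∧ g 0 0 = 0 ∧ ft 0 0 = 0 ∧ gt 0 0 = 0 ∧
  ∀ᶠ p in 𝓝 (0 : (Fin n → ℂ) × (Fin n → ℂ) × ℂ),
    g p.1 (Q p.1 p.2.1 p.2.2) =
      Q' (f p.1 (Q p.1 p.2.1 p.2.2)) (ft p.2.1 p.2.2) (gt p.2.1 p.2.2)

/-- `M` is of finite type at `0`: `(z,χ) ↦ Q(z,χ,0)` does not vanish identically near `0`. -/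
def FiniteType (Q : (Fin n → ℂ) → (Fin n → ℂ) → ℂ → ℂ) : Prop :=
  ¬ ∀ᶠ p in 𝓝 (0 : (Fin n → ℂ) × (Fin n → ℂ)), Q p.1 p.2 0 = 0

/-- Jacobian matrix of `z ↦ f(z,0)` at `z`. -/
noncomputable def jacz (f : (Fin n → ℂ) → ℂ → Fin n → ℂ) (z : Fin n → ℂ) :
    Matrix (Fin n) (Fin n) ℂ :=
  Matrix.of fun i j => pd j (fun z' => f z' 0 i) z

/-- `ℋ` is Segre transversal to `ℳ'` at `0`: `∂g/∂w(0,0) ≠ 0`. -/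
noncomputable def SegreTransversal (g : (Fin n → ℂ) → ℂ → ℂ) : Prop :=
  deriv (fun w => g 0 w) 0 ≠ 0

/-- `ℋ` is totally Segre nondegenerate at `0`. -/
def TotallySegreNondeg (f ft : (Fin n → ℂ) → ℂ → Fin n → ℂ) : Prop :=
  (¬ ∀ᶠ z in 𝓝 (0 : Fin n → ℂ), (jacz f z).det = 0) ∧
  (¬ ∀ᶠ χ in 𝓝 (0 : Fin n → ℂ), (jacz ft χ).det = 0)

/-- `ℋ` is transversally null: `g ≡ 0` and `g̃ ≡ 0` near `0`. -/
def TransversallyNull (g gt : (Fin n → ℂ) → ℂ → ℂ) : Prop :=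
  (∀ᶠ p in 𝓝 (0 : (Fin n → ℂ) × ℂ), g p.1 p.2 = 0) ∧
  (∀ᶠ p in 𝓝 (0 : (Fin n → ℂ) × ℂ), gt p.1 p.2 = 0)

/-- The `k`-th coordinate direction in `ℂⁿ × ℂ`. -/
noncomputable def dirCT (n : ℕ) (k : Fin (n + 1)) : (Fin n → ℂ) × ℂ :=
  if h : (k : ℕ) < n then (Pi.single ⟨k, h⟩ 1, 0) else (0, 1)

/-- `M` is holomorphically nondegenerate at `0`: for some `K`, the map
`(χ,τ) ↦ (∂_z^α Q(0,χ,τ))_{|α| ≤ K}` has generic rank `n+1`. -/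
def HolNondeg (Q : (Fin n → ℂ) → (Fin n → ℂ) → ℂ → ℂ) : Prop :=
  ∃ K : ℕ, ∃ A : Fin (n + 1) → Fin n → ℕ, (∀ j, (∑ i, A j i) ≤ K) ∧
    ¬ ∀ᶠ p in 𝓝 (0 : (Fin n → ℂ) × ℂ),
      (Matrix.of fun j k : Fin (n + 1) =>
        fderiv ℂ (fun q : (Fin n → ℂ) × ℂ => mpd (A j) (fun z => Q z q.1 q.2) 0) p
          (dirCT n k)).det = 0

/-- `M` is of class `𝒞` at `0`: for some `K`, the map
`χ ↦ (∂_z^α Q(0,χ,0))_{|α| ≤ K}` has generic rank `n`. -/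
def ClassC (Q : (Fin n → ℂ) → (Fin n → ℂ) → ℂ → ℂ) : Prop :=
  ∃ K : ℕ, ∃ A : Fin n → Fin n → ℕ, (∀ j, (∑ i, A j i) ≤ K) ∧
    ¬ ∀ᶠ χ in 𝓝 (0 : Fin n → ℂ),
      (Matrix.of fun j k : Fin n =>
        pd k (fun χ' => mpd (A j) (fun z => Q z χ' 0) 0) χ).det = 0

/-- `M` is finitely nondegenerate at `0`: for some `K`, the vectors
`∂_χ ∂_z^α Q(0,0,0)`, `|α| ≤ K`, span `ℂⁿ`. -/
def FinNondeg (Q : (Fin n → ℂ) → (Fin n → ℂ) → ℂ → ℂ) : Prop :=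
  ∃ K : ℕ, Submodule.span ℂ
    {v : Fin n → ℂ | ∃ α : Fin n → ℕ, (∑ i, α i) ≤ K ∧
      v = fun i => pd i (fun χ => mpd α (fun z => Q z χ 0) 0) 0} = ⊤

/-- Full Jacobian matrix of `(z,w) ↦ (f(z,w), g(z,w))` at `p ∈ ℂⁿ × ℂ`. -/
noncomputable def jacFull (f : (Fin n → ℂ) → ℂ → Fin n → ℂ) (g : (Fin n → ℂ) → ℂ → ℂ)
    (p : (Fin n → ℂ) × ℂ) : Matrix (Fin (n + 1)) (Fin (n + 1)) ℂ :=
  Matrix.of fun i k =>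
    fderiv ℂ (fun q : (Fin n → ℂ) × ℂ => (Fin.snoc (f q.1 q.2) (g q.1 q.2) : Fin (n + 1) → ℂ) i) p (dirCT n k)

/-- The degree-`d` homogeneous term of the Taylor series of `φ` at `0`. -/
noncomputable def homogTerm (d : ℕ) (φ : (Fin n → ℂ) → ℂ) : (Fin n → ℂ) → ℂ :=
  fun z => iteratedFDeriv ℂ d φ 0 (fun _ => z) / (d.factorial : ℂ)

/-- The order of vanishing of `φ` at `0`. -/
noncomputable def vanishOrder (φ : (Fin n → ℂ) → ℂ) : ℕ :=
  sInf {d | homogTerm d φ ≠ 0}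

theorem det_ne_zero_of_injective {V : Type*} [NormedAddCommGroup V] [NormedSpace ℂ V]
    [FiniteDimensional ℂ V] {L : V →L[ℂ] V} (h : ∀ v, L v = 0 → v = 0) : L.det ≠ 0 := by
  have : IsUnit (L : V →ₗ[ℂ] V) :=
    (LinearMap.isUnit_iff_ker_eq_bot _).2 ((LinearMap.ker_eq_bot').2 h)
  exact ((LinearMap.isUnit_iff_isUnit_det _).1 this).ne_zero

theorem eq_zero_of_det_ne_zero {V : Type*} [NormedAddCommGroup V] [NormedSpace ℂ V]
    [FiniteDimensional ℂ V] {L : V →L[ℂ] V} (h : L.det ≠ 0) {v : V} (hv : L v = 0) : v = 0 := by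
  have : IsUnit (L : V →ₗ[ℂ] V) := (LinearMap.isUnit_iff_isUnit_det _).2 (Ne.isUnit h)
  exact (LinearMap.ker_eq_bot').1 ((LinearMap.isUnit_iff_ker_eq_bot _).1 this) v hv

theorem surjective_of_det_ne_zero {V : Type*} [NormedAddCommGroup V] [NormedSpace ℂ V]
    [FiniteDimensional ℂ V] {L : V →L[ℂ] V} (h : L.det ≠ 0) : Function.Surjective L := by
  have : Function.Injective (L : V →ₗ[ℂ] V) := (injective_iff_map_eq_zero L).2
    fun v hv => eq_zero_of_det_ne_zero h hv
  exact LinearMap.injective_iff_surjective.1 this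

theorem exists_ne_zero_of_det_eq_zero {V : Type*} [NormedAddCommGroup V] [NormedSpace ℂ V]
    [FiniteDimensional ℂ V] {L : V →L[ℂ] V} (h : L.det = 0) : ∃ v, v ≠ 0 ∧ L v = 0 := by
  by_contra! H
  exact det_ne_zero_of_injective (fun v hv => by_contra fun h0 => H v h0 hv) h

theorem det_eq_zero_of_comp_eq_zero {V : Type*} [NormedAddCommGroup V] [NormedSpace ℂ V]
    [FiniteDimensional ℂ V] {L : V →L[ℂ] V} {θ : V → ℂ} (h : ∀ v, θ (L v) = 0)
    {v : V} (hv : θ v ≠ 0) : L.det = 0 := by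
  by_contra hL
  obtain ⟨u, rfl⟩ := surjective_of_det_ne_zero hL v
  exact hv (h u)

theorem analyticAt_det {V W : Type*} [NormedAddCommGroup V] [NormedSpace ℂ V]
    [FiniteDimensional ℂ V] [NormedAddCommGroup W] [NormedSpace ℂ W] {L : W → V →L[ℂ] V} {x : W}
    (h : AnalyticAt ℂ L x) : AnalyticAt ℂ (fun y => (L y).det) x := by
  let b := Module.finBasis ℂ V
  have key : ∀ y, (L y).det = (LinearMap.toMatrix b b (L y : V →ₗ[ℂ] V)).det :=
    fun y => (LinearMap.det_toMatrix b _).symm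
  simp only [key, Matrix.det_apply']
  refine Finset.analyticAt_fun_sum _ fun σ _ => analyticAt_const.mul
    (Finset.analyticAt_fun_prod _ fun i _ => ?_)
  simp only [LinearMap.toMatrix_apply]
  let Λ : (V →L[ℂ] V) →L[ℂ] ℂ := (LinearMap.toContinuousLinearMap (b.coord (σ i))) ∘L
    ContinuousLinearMap.apply ℂ V (b i)
  exact (Λ.analyticAt (L x)).comp h

theorem eq_zero_of_eventually_eq_zero {W : Type*} [NormedAddCommGroup W] [NormedSpace ℂ W]
    {F : W → ℂ} {r : ℝ} (hF : ∀ x ∈ Metric.ball (0 : W) r, AnalyticAt ℂ F x) {x : W}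
    (hx : x ∈ Metric.ball (0 : W) r) (h : ∀ᶠ y in 𝓝 x, F y = 0) :
    ∀ y ∈ Metric.ball (0 : W) r, F y = 0 := by
  let _ : NormedSpace ℝ W := NormedSpace.restrictScalars ℝ ℂ W
  exact AnalyticOnNhd.eqOn_zero_of_preconnected_of_eventuallyEq_zero (f := F) hF
    (convex_ball (0 : W) r).isPreconnected hx h

/-- Hurwitz's theorem for a continuous family of holomorphic functions of one variable. -/
theorem eq_zero_of_frequently_ne_zero {X : Type*} [TopologicalSpace X] {F : ℂ → X → ℂ} {x₀ : X}
    {U : Set ℂ} (hU : IsOpen U) (hUc : IsPreconnected U)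
    (hd : ∀ᶠ x in 𝓝 x₀, DifferentiableOn ℂ (fun s => F s x) U)
    (hc : ∀ s ∈ U, ContinuousAt (fun p : X × ℂ => F p.2 p.1) (x₀, s))
    (hne : ∃ᶠ x in 𝓝 x₀, ∀ s ∈ U, F s x ≠ 0) {s₀ : ℂ} (hs₀ : s₀ ∈ U) (h0 : F s₀ x₀ = 0) :
    ∀ s ∈ U, F s x₀ = 0 := by
  have han : AnalyticOnNhd ℂ (fun s => F s x₀) U := hd.self_of_nhds.analyticOnNhd hU
  rcases (han s₀ hs₀).eventually_eq_zero_or_eventually_ne_zero with h | h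
  · exact fun s hs => han.eqOn_zero_of_preconnected_of_eventuallyEq_zero hUc hs₀ h hs
  exfalso
  obtain ⟨ρ, hρ, hρU⟩ := Metric.nhds_basis_closedBall.mem_iff.1
    ((hU.mem_nhds hs₀) : U ∈ 𝓝 s₀)
  obtain ⟨ρ', hρ', hne'⟩ := Metric.nhds_basis_closedBall.eventually_iff.1
    (eventually_nhdsWithin_iff.1 h)
  set R := min ρ ρ' with hR
  have hR0 : 0 < R := lt_min hρ hρ'
  have hsub : Metric.closedBall s₀ R ⊆ U :=
    (Metric.closedBall_subset_closedBall (min_le_left _ _)).trans hρU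
  have hsph : ∀ s ∈ Metric.sphere s₀ R, F s x₀ ≠ 0 := fun s hs =>
    hne' (Metric.closedBall_subset_closedBall (min_le_right _ _)
      (Metric.sphere_subset_closedBall hs)) (by
        rintro rfl
        simp at hs
        exact hR0.ne hs)
  obtain ⟨s₁, hs₁, hmin⟩ := (isCompact_sphere s₀ R).exists_isMinOn
    (NormedSpace.sphere_nonempty.2 hR0.le)
    (f := fun s => ‖F s x₀‖) (fun s hs => ((han s (hsub (Metric.sphere_subset_closedBall
      hs))).continuousAt.norm.continuousWithinAt))
  set m := ‖F s₁ x₀‖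
  have hm : 0 < m := norm_pos_iff.2 (hsph s₁ hs₁)
  have e1 : ∀ᶠ x in 𝓝 x₀, ∀ s ∈ Metric.sphere s₀ R, m / 2 < ‖F s x‖ := by
    refine (isCompact_sphere s₀ R).eventually_forall_of_forall_eventually fun s hs => ?_
    exact (hc s (hsub (Metric.sphere_subset_closedBall hs))).norm.eventually
      (lt_mem_nhds (lt_of_lt_of_le (half_lt_self hm) (hmin hs)))
  have e2 : ∀ᶠ x in 𝓝 x₀, ‖F s₀ x‖ < m / 2 := by
    have : ContinuousAt (fun x => F s₀ x) x₀ :=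
      ContinuousAt.comp (g := fun p : X × ℂ => F p.2 p.1) (f := fun x => (x, s₀)) (hc s₀ hs₀)
        (by fun_prop)
    refine this.norm.eventually (gt_mem_nhds ?_)
    simpa [h0] using hm
  obtain ⟨x, hx, hx1, hx2, hx3⟩ := (hne.and_eventually (e1.and (e2.and hd))).exists
  have hdc : DiffContOnCl ℂ (fun s => (F s x)⁻¹) (Metric.ball s₀ R) := by
    refine DifferentiableOn.diffContOnCl ?_
    rw [closure_ball _ hR0.ne']
    exact (hx3.mono hsub).inv fun s hs => hx s (hsub hs)
  have := Complex.norm_le_of_forall_mem_frontier_norm_le Metric.isBounded_ball hdc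
    (C := (m / 2)⁻¹) (fun s hs => by
      rw [frontier_ball _ hR0.ne'] at hs
      rw [norm_inv]
      exact inv_anti₀ (half_pos hm) (hx1 s hs).le) (subset_closure (Metric.mem_ball_self hR0))
  rw [norm_inv, inv_le_inv₀ (norm_pos_iff.2 (hx s₀ hs₀)) (half_pos hm)] at this
  linarith

section Segre

variable {E : Type*} [NormedAddCommGroup E] [NormedSpace ℂ E]

/-- The derivative of a defining function of the target complexification in the direction of the
image of `∂/∂w`, along the source complexification. -/
noncomputable def transversality (q q' : E × E × ℂ → ℂ) (H Ht : E × ℂ → E × ℂ)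
    (p : E × E × ℂ) : ℂ :=
  (fderiv ℂ H (p.1, q p) (0, 1)).2 -
    fderiv ℂ q' ((H (p.1, q p)).1, Ht p.2) ((fderiv ℂ H (p.1, q p) (0, 1)).1, 0)

/-- The maps `q, q', H, Ht` are holomorphic at the points determined by `p`, satisfy the Segre
preserving equation near `p`, and `∂q'/∂τ ≠ 0` at the image of `p`. -/
structure IsSegreAt (q q' : E × E × ℂ → ℂ) (H Ht : E × ℂ → E × ℂ) (p : E × E × ℂ) : Prop where
  analyticAt_source : AnalyticAt ℂ q p
  analyticAt_left : AnalyticAt ℂ H (p.1, q p)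
  analyticAt_right : AnalyticAt ℂ Ht p.2
  analyticAt_target : AnalyticAt ℂ q' ((H (p.1, q p)).1, Ht p.2)
  eventually_eq : ∀ᶠ x in 𝓝 p, (H (x.1, q x)).2 = q' ((H (x.1, q x)).1, Ht x.2)
  ne_zero : fderiv ℂ q' ((H (p.1, q p)).1, Ht p.2) (0, 0, 1) ≠ 0

namespace IsSegreAt

variable {q q' : E × E × ℂ → ℂ} {H Ht : E × ℂ → E × ℂ} {p : E × E × ℂ}

theorem analyticAt_transversality [CompleteSpace E] (h : IsSegreAt q q' H Ht p) :
    AnalyticAt ℂ (transversality q q' H Ht) p := by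
  have e1 : AnalyticAt ℂ (fun x : E × E × ℂ => (x.1, q x)) p :=
    analyticAt_fst.prod h.analyticAt_source
  have e2 : AnalyticAt ℂ (fun x : E × E × ℂ => fderiv ℂ H (x.1, q x) (0, 1)) p :=
    ((ContinuousLinearMap.apply ℂ (E × ℂ) ((0, 1) : E × ℂ)).analyticAt _).comp
      (AnalyticAt.fun_comp_of_eq (g := fderiv ℂ H) h.analyticAt_left.fderiv e1 rfl)
  have e3 : AnalyticAt ℂ (fun x : E × E × ℂ => ((H (x.1, q x)).1, Ht x.2)) p :=
    (analyticAt_fst.comp (AnalyticAt.fun_comp_of_eq (g := H) h.analyticAt_left e1 rfl)).prod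
      (AnalyticAt.fun_comp_of_eq (g := Ht) h.analyticAt_right analyticAt_snd rfl)
  have e4 : AnalyticAt ℂ (fun x : E × E × ℂ => fderiv ℂ q' ((H (x.1, q x)).1, Ht x.2)) p :=
    AnalyticAt.fun_comp_of_eq (g := fderiv ℂ q') h.analyticAt_target.fderiv e3 rfl
  have e5 : AnalyticAt ℂ (fun x : E × E × ℂ =>
      ((fderiv ℂ H (x.1, q x) (0, 1)).1, (0 : E × ℂ))) p :=
    (analyticAt_fst.comp e2).prod analyticAt_const
  have e6 := (e4.contDiffAt (n := ⊤)).clm_apply e5.contDiffAt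
  exact (analyticAt_snd.comp e2).sub (analyticWithinAt_univ.1
    (contDiffWithinAt_omega_iff_analyticWithinAt.1 e6.contDiffWithinAt))

theorem fderiv_eq (h : IsSegreAt q q' H Ht p) (x : E) (v : E × ℂ) :
    (fderiv ℂ H (p.1, q p) (x, fderiv ℂ q p (x, v))).2 =
      fderiv ℂ q' ((H (p.1, q p)).1, Ht p.2)
        ((fderiv ℂ H (p.1, q p) (x, fderiv ℂ q p (x, v))).1, fderiv ℂ Ht p.2 v) := by
  have e1 : HasFDerivAt (fun x : E × E × ℂ => (x.1, q x)) _ p :=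
    hasFDerivAt_fst.prodMk h.analyticAt_source.differentiableAt.hasFDerivAt
  have e2 : HasFDerivAt (fun x : E × E × ℂ => H (x.1, q x)) _ p :=
    HasFDerivAt.comp (g := H) p h.analyticAt_left.differentiableAt.hasFDerivAt e1
  have e3 : HasFDerivAt (fun x : E × E × ℂ => Ht x.2) _ p :=
    HasFDerivAt.comp (g := Ht) p h.analyticAt_right.differentiableAt.hasFDerivAt hasFDerivAt_snd
  have e4 : HasFDerivAt (fun x : E × E × ℂ => q' ((H (x.1, q x)).1, Ht x.2)) _ p :=
    HasFDerivAt.comp (g := q') p h.analyticAt_target.differentiableAt.hasFDerivAt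
      (e2.fst.prodMk e3)
  have := (e2.snd.congr_of_eventuallyEq (h.eventually_eq.mono fun _ hx => hx.symm)).unique e4
  simpa using DFunLike.congr_fun this (x, v)

theorem fderiv_mul_transversality (h : IsSegreAt q q' H Ht p) (v : E × ℂ) :
    fderiv ℂ q p (0, v) * transversality q q' H Ht p =
      fderiv ℂ q' ((H (p.1, q p)).1, Ht p.2) (0, fderiv ℂ Ht p.2 v) := by
  have key := h.fderiv_eq 0 v
  set c := fderiv ℂ q p (0, v)
  have e1 : ((0 : E), c) = c • (0, 1) := by simp
  rw [e1, map_smul] at key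
  set b := fderiv ℂ H (p.1, q p) (0, 1) with hb
  have e2 : ((c • b).1, fderiv ℂ Ht p.2 v) =
      c • ((b.1, 0) : E × E × ℂ) + (0, fderiv ℂ Ht p.2 v) := by simp
  rw [e2, map_add, map_smul] at key
  simp only [transversality, ← hb]
  have e3 : (c • b).2 = c * b.2 := rfl
  rw [smul_eq_mul, e3] at key
  linear_combination key

theorem eq_mul_transversality (h : IsSegreAt q q' H Ht p) (v : E × ℂ) :
    (fderiv ℂ H (p.1, q p) v).2 -
      fderiv ℂ q' ((H (p.1, q p)).1, Ht p.2) ((fderiv ℂ H (p.1, q p) v).1, 0) =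
      (v.2 - fderiv ℂ q p (v.1, 0)) * transversality q q' H Ht p := by
  have key := h.fderiv_eq v.1 0
  rw [map_zero] at key
  set d := fderiv ℂ q p (v.1, 0)
  have e1 : v = (v.1, d) + (v.2 - d) • ((0 : E), (1 : ℂ)) := by
    ext <;> simp
  have e2 : fderiv ℂ H (p.1, q p) v = fderiv ℂ H (p.1, q p) (v.1, d) +
      (v.2 - d) • fderiv ℂ H (p.1, q p) (0, 1) := by
    conv_lhs => rw [e1, map_add, map_smul]
  rw [e2]
  set b := fderiv ℂ H (p.1, q p) (0, 1) with hb
  set b' := fderiv ℂ H (p.1, q p) (v.1, d)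
  have e3 : ((b' + (v.2 - d) • b).1, (0 : E × ℂ)) = (b'.1, 0) + (v.2 - d) • (b.1, 0) := by simp
  rw [e3, map_add, map_smul]
  simp only [transversality, ← hb]
  have e4 : (b' + (v.2 - d) • b).2 = b'.2 + (v.2 - d) * b.2 := rfl
  rw [smul_eq_mul, e4]
  linear_combination key

variable [FiniteDimensional ℂ E]

theorem det_left_eq_zero (h : IsSegreAt q q' H Ht p) (h0 : transversality q q' H Ht p = 0) :
    (fderiv ℂ H (p.1, q p)).det = 0 :=
  det_eq_zero_of_comp_eq_zero (v := (0, 1))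
    (θ := fun v => v.2 - fderiv ℂ q' ((H (p.1, q p)).1, Ht p.2) (v.1, 0))
    (fun v => by simpa [h0] using h.eq_mul_transversality v) (by
      have : ((0 : E), (0 : E × ℂ)) = 0 := rfl
      simp [this])

theorem det_right_eq_zero (h : IsSegreAt q q' H Ht p) (h0 : transversality q q' H Ht p = 0) :
    (fderiv ℂ Ht p.2).det = 0 :=
  det_eq_zero_of_comp_eq_zero (v := (0, 1))
    (θ := fun v => fderiv ℂ q' ((H (p.1, q p)).1, Ht p.2) (0, v))
    (fun v => by simpa [h0] using (h.fderiv_mul_transversality v).symm) h.ne_zero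

theorem transversality_eq_zero_of_left (h : IsSegreAt q q' H Ht p)
    (hdet : (fderiv ℂ H (p.1, q p)).det = 0)
    (hinj : ∀ v : E × ℂ, (fderiv ℂ H (p.1, q p) v).1 = 0 → v.2 - fderiv ℂ q p (v.1, 0) = 0 →
      v = 0) : transversality q q' H Ht p = 0 := by
  obtain ⟨v, hv, hv0⟩ := exists_ne_zero_of_det_eq_zero hdet
  have key := h.eq_mul_transversality v
  have e : ((0 : E), (0 : E × ℂ)) = 0 := rfl
  rw [hv0, Prod.fst_zero, Prod.snd_zero, e, map_zero, sub_zero] at key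
  exact (mul_eq_zero.1 key.symm).resolve_left fun h1 => hv (hinj v (by simp [hv0]) h1)

theorem transversality_eq_zero_of_right (h : IsSegreAt q q' H Ht p)
    (hdet : (fderiv ℂ Ht p.2).det = 0)
    (hinj : ∀ v : E × ℂ, (fderiv ℂ Ht p.2 v).1 = 0 → fderiv ℂ q p (0, v) = 0 → v = 0) :
    transversality q q' H Ht p = 0 := by
  obtain ⟨v, hv, hv0⟩ := exists_ne_zero_of_det_eq_zero hdet
  have key := h.fderiv_mul_transversality v
  have e : ((0 : E), (0 : E × ℂ)) = 0 := rfl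
  rw [hv0, e, map_zero] at key
  exact (mul_eq_zero.1 key).resolve_left fun h1 => hv (hinj v (by simp [hv0]) h1)

end IsSegreAt

theorem not_eventually_comp_eq_zero [FiniteDimensional ℂ E] {k : E × E → ℂ} {φ ψ : E → E}
    (hk : AnalyticAt ℂ k 0) (hk0 : ¬ ∀ᶠ p in 𝓝 0, k p = 0)
    (hφ : AnalyticAt ℂ φ 0) (hψ : AnalyticAt ℂ ψ 0) (hφ0 : φ 0 = 0) (hψ0 : ψ 0 = 0)
    (hφd : ¬ ∀ᶠ z in 𝓝 0, (fderiv ℂ φ z).det = 0)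
    (hψd : ¬ ∀ᶠ z in 𝓝 0, (fderiv ℂ ψ z).det = 0) :
    ¬ ∀ᶠ p in 𝓝 (0 : E × E), k (φ p.1, ψ p.2) = 0 := by
  intro H
  have : CompleteSpace E := FiniteDimensional.complete ℂ E
  obtain ⟨r, hr, hkr⟩ := Metric.eventually_nhds_iff_ball.1 hk.eventually_analyticAt
  have hc : Tendsto (fun p : E × E => (φ p.1, ψ p.2)) (𝓝 (0, 0)) (𝓝 0) := by
    have h1 := hφ.continuousAt.tendsto.comp (continuous_fst.tendsto (0 : E × E))
    have h2 := hψ.continuousAt.tendsto.comp (continuous_snd.tendsto (0 : E × E))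
    rw [hφ0] at h1
    rw [hψ0] at h2
    exact h1.prodMk_nhds h2
  have hb : ∀ᶠ p in 𝓝 ((0 : E), (0 : E)), (φ p.1, ψ p.2) ∈ Metric.ball (0 : E × E) r :=
    hc (Metric.ball_mem_nhds 0 hr)
  have H' := hb.and (eventually_eventually_nhds.2 H)
  rw [nhds_prod_eq] at H'
  obtain ⟨pa, hpa, pb, hpb, hab⟩ := eventually_prod_iff.1 H'
  obtain ⟨z, hz, hzφ, hza⟩ := ((not_eventually.1 hφd).and_eventually
    (hφ.eventually_analyticAt.and hpa)).exists
  obtain ⟨χ, hχ, hχψ, hχb⟩ := ((not_eventually.1 hψd).and_eventually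
    (hψ.eventually_analyticAt.and hpb)).exists
  have hm : map (fun p : E × E => (φ p.1, ψ p.2)) (𝓝 (z, χ)) = 𝓝 (φ z, ψ χ) := by
    rw [nhds_prod_eq, nhds_prod_eq,
      ← hzφ.hasStrictFDerivAt.map_nhds_eq_of_surj
        (LinearMap.range_eq_top.2 (surjective_of_det_ne_zero hz)),
      ← hχψ.hasStrictFDerivAt.map_nhds_eq_of_surj
        (LinearMap.range_eq_top.2 (surjective_of_det_ne_zero hχ)), prod_map_map_eq]
  obtain ⟨hm1, hm2⟩ := hab hza hχb
  have hz0 : ∀ᶠ y in 𝓝 (φ z, ψ χ), k y = 0 := by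
    rw [← hm]
    exact eventually_map.2 hm2
  refine hk0 ?_
  filter_upwards [Metric.ball_mem_nhds 0 hr] using eq_zero_of_eventually_eq_zero hkr hm1 hz0

/-- Germs at the origin of normal defining functions `q`, `q'` and of a Segre preserving map
between the associated complexifications. -/
structure IsSegreMap (q q' : E × E × ℂ → ℂ) (H Ht : E × ℂ → E × ℂ) : Prop where
  analyticAt_source : AnalyticAt ℂ q 0
  source_left : ∀ᶠ p in 𝓝 (0 : E × E × ℂ), q (0, p.2) = p.2.2
  source_right : ∀ᶠ p in 𝓝 (0 : E × E × ℂ), q (p.1, 0, p.2.2) = p.2.2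
  analyticAt_target : AnalyticAt ℂ q' 0
  target_left : ∀ᶠ p in 𝓝 (0 : E × E × ℂ), q' (0, p.2) = p.2.2
  target_right : ∀ᶠ p in 𝓝 (0 : E × E × ℂ), q' (p.1, 0, p.2.2) = p.2.2
  analyticAt_left : AnalyticAt ℂ H 0
  analyticAt_right : AnalyticAt ℂ Ht 0
  map_zero_left : H 0 = 0
  map_zero_right : Ht 0 = 0
  eventually_eq : ∀ᶠ p in 𝓝 (0 : E × E × ℂ),
    (H (p.1, q p)).2 = q' ((H (p.1, q p)).1, Ht p.2)

namespace IsSegreMap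

variable {q q' : E × E × ℂ → ℂ} {H Ht : E × ℂ → E × ℂ}

theorem exists_radius [CompleteSpace E] (h : IsSegreMap q q' H Ht) : ∃ r > 0,
    (∀ v ∈ Metric.ball (0 : E × ℂ) r, AnalyticAt ℂ H v ∧ AnalyticAt ℂ Ht v) ∧
    ∀ p ∈ Metric.ball (0 : E × E × ℂ) r, IsSegreAt q q' H Ht p ∧ q (0, p.2) = p.2.2 ∧
      q (p.1, 0, p.2.2) = p.2.2 ∧ (∀ᶠ z in 𝓝 (H (p.1, q p)).1, q' (z, 0) = 0) ∧
      (H (p.1, 0)).2 = 0 ∧ (Ht (p.2.1, 0)).2 = 0 ∧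
      AnalyticAt ℂ q' ((H (p.1, 0)).1, Ht (p.2.1, 0)) := by
  have hq0 : q 0 = 0 := h.source_left.self_of_nhds
  have t1 : Tendsto (fun p : E × E × ℂ => (p.1, q p)) (𝓝 0) (𝓝 0) := by
    have := h.analyticAt_source.continuousAt.tendsto
    rw [hq0] at this
    exact (continuous_fst.tendsto (0 : E × E × ℂ)).prodMk_nhds this
  have t2 : Tendsto (fun p : E × E × ℂ => H (p.1, q p)) (𝓝 0) (𝓝 0) := by
    have := h.analyticAt_left.continuousAt.tendsto.comp t1
    rwa [h.map_zero_left] at this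
  have t3 : Tendsto (fun p : E × E × ℂ => Ht p.2) (𝓝 0) (𝓝 0) := by
    have := h.analyticAt_right.continuousAt.tendsto.comp
      (continuous_snd.tendsto (0 : E × E × ℂ))
    rwa [h.map_zero_right] at this
  have t4 : Tendsto (fun p : E × E × ℂ => ((H (p.1, q p)).1, Ht p.2)) (𝓝 0) (𝓝 0) :=
    ((continuous_fst.tendsto (0 : E × ℂ)).comp t2).prodMk_nhds t3
  have t5 : Tendsto (fun p : E × E × ℂ => (p.1, (0 : E × ℂ))) (𝓝 0) (𝓝 0) :=
    (show Continuous fun p : E × E × ℂ => (p.1, (0 : E × ℂ)) by fun_prop).tendsto 0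
  have t6 : Tendsto (fun p : E × E × ℂ => ((0 : E), p.2.1, (0 : ℂ))) (𝓝 0) (𝓝 0) :=
    (show Continuous fun p : E × E × ℂ => ((0 : E), p.2.1, (0 : ℂ)) by fun_prop).tendsto 0
  have t7 : Tendsto (fun z : E => (z, (0 : E × ℂ))) (𝓝 0) (𝓝 0) :=
    (show Continuous fun z : E => (z, (0 : E × ℂ)) by fun_prop).tendsto 0
  have hd : ∀ᶠ p in 𝓝 (0 : E × E × ℂ), fderiv ℂ q' p (0, 0, 1) ≠ 0 := by
    have hc : ContinuousAt (fun p => fderiv ℂ q' p (0, 0, 1)) 0 :=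
      h.analyticAt_target.fderiv.continuousAt.clm_apply continuousAt_const
    refine hc.eventually_ne ?_
    have e1 : HasFDerivAt (fun v : E × ℂ => q' (0, v)) _ 0 :=
      HasFDerivAt.comp (g := q') (0 : E × ℂ)
        h.analyticAt_target.differentiableAt.hasFDerivAt (hasFDerivAt_prodMk_right 0 0)
    have e2 : (fun v : E × ℂ => q' (0, v)) =ᶠ[𝓝 0] Prod.snd :=
      (show Continuous fun v : E × ℂ => ((0 : E), v) by fun_prop).tendsto 0 |>.eventually
        h.target_left
    have := DFunLike.congr_fun
      ((hasFDerivAt_snd.congr_of_eventuallyEq e2).unique e1) ((0 : E), (1 : ℂ))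
    simp at this
    simp [← this]
  have hz : ∀ᶠ z in 𝓝 (0 : E), q' (z, 0) = 0 := t7.eventually h.target_right
  have hl : ∀ᶠ p in 𝓝 (0 : E × E × ℂ), (H (p.1, 0)).2 = 0 := by
    filter_upwards [t5.eventually h.eventually_eq, t5.eventually h.source_right,
      t5.eventually (t4.eventually h.target_right)] with p hp1 hp2 hp3
    have e : (0 : E × ℂ) = (0, 0) := rfl
    simp only [h.map_zero_right, Prod.snd_zero] at hp1 hp2 hp3
    rw [e, hp2, ← e] at hp1
    rw [hp1]
    rw [e, hp2] at hp3
    exact hp3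
  have hr : ∀ᶠ p in 𝓝 (0 : E × E × ℂ), (Ht (p.2.1, 0)).2 = 0 := by
    filter_upwards [t6.eventually h.eventually_eq, t6.eventually h.source_left,
      t6.eventually (t4.eventually h.target_left)] with p hp1 hp2 hp3
    have e : ((0 : E), (0 : ℂ)) = 0 := rfl
    rw [hp2, e, h.map_zero_left] at hp1
    exact hp3.symm.trans hp1.symm
  have t9 : Tendsto (fun p : E × E × ℂ => ((H (p.1, 0)).1, Ht (p.2.1, 0))) (𝓝 0) (𝓝 0) := by
    have s1 : Tendsto (fun p : E × E × ℂ => (p.1, (0 : ℂ))) (𝓝 0) (𝓝 0) :=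
      (show Continuous fun p : E × E × ℂ => (p.1, (0 : ℂ)) by fun_prop).tendsto 0
    have s2 : Tendsto (fun p : E × E × ℂ => (p.2.1, (0 : ℂ))) (𝓝 0) (𝓝 0) :=
      (show Continuous fun p : E × E × ℂ => (p.2.1, (0 : ℂ)) by fun_prop).tendsto 0
    have s3 := (continuous_fst.tendsto _).comp (h.analyticAt_left.continuousAt.tendsto.comp s1)
    have s4 := h.analyticAt_right.continuousAt.tendsto.comp s2
    rw [h.map_zero_left] at s3
    rw [h.map_zero_right] at s4
    exact s3.prodMk_nhds s4
  obtain ⟨r₁, hr₁, H₁⟩ := Metric.eventually_nhds_iff_ball.1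
    (h.analyticAt_left.eventually_analyticAt.and h.analyticAt_right.eventually_analyticAt)
  have t8 : Tendsto (fun p : E × E × ℂ => p.2) (𝓝 0) (𝓝 0) := continuous_snd.tendsto 0
  obtain ⟨r₂, hr₂, H₂⟩ := Metric.eventually_nhds_iff_ball.1
    (show ∀ᶠ p in 𝓝 (0 : E × E × ℂ), IsSegreAt q q' H Ht p ∧ q (0, p.2) = p.2.2 ∧
      q (p.1, 0, p.2.2) = p.2.2 ∧ (∀ᶠ z in 𝓝 (H (p.1, q p)).1, q' (z, 0) = 0) ∧
      (H (p.1, 0)).2 = 0 ∧ (Ht (p.2.1, 0)).2 = 0 ∧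
      AnalyticAt ℂ q' ((H (p.1, 0)).1, Ht (p.2.1, 0)) by
      filter_upwards [h.analyticAt_source.eventually_analyticAt,
        t1.eventually h.analyticAt_left.eventually_analyticAt,
        t8.eventually h.analyticAt_right.eventually_analyticAt,
        t4.eventually h.analyticAt_target.eventually_analyticAt,
        eventually_eventually_nhds.2 h.eventually_eq, t4.eventually hd, h.source_left,
        h.source_right, ((continuous_fst.tendsto (0 : E × ℂ)).comp t2).eventually
          (eventually_eventually_nhds.2 hz), hl, hr,
        t9.eventually h.analyticAt_target.eventually_analyticAt]
        with p a1 a2 a3 a4 a5 a6 a7 a8 a9 a10 a11 a12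
      exact ⟨⟨a1, a2, a3, a4, a5, a6⟩, a7, a8, a9, a10, a11, a12⟩)
  exact ⟨min r₁ r₂, lt_min hr₁ hr₂,
    fun v hv => H₁ v (Metric.ball_subset_ball (min_le_left _ _) hv),
    fun p hp => H₂ p (Metric.ball_subset_ball (min_le_right _ _) hp)⟩

end IsSegreMap

theorem exists_mem_ball_det_ne_zero {φ : E → E}
    (h : ¬ ∀ᶠ z in 𝓝 (0 : E), (fderiv ℂ φ z).det = 0) {r : ℝ} (hr : 0 < r) :
    ∃ z ∈ Metric.ball (0 : E) r, (fderiv ℂ φ z).det ≠ 0 := by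
  obtain ⟨z, hz, hz'⟩ := ((not_eventually.1 h).and_eventually (Metric.ball_mem_nhds 0 hr)).exists
  exact ⟨z, hz', hz⟩

theorem fderiv_slice {F : E × ℂ → E × ℂ} {z : E} (hF : DifferentiableAt ℂ F (z, 0)) (v : E) :
    fderiv ℂ (fun z => (F (z, 0)).1) z v = (fderiv ℂ F (z, 0) (v, 0)).1 := by
  have e1 : HasFDerivAt (fun z : E => F (z, 0)) _ z :=
    HasFDerivAt.comp (g := F) z hF.hasFDerivAt (hasFDerivAt_prodMk_left z (0 : ℂ))
  rw [e1.fst.fderiv]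
  simp

theorem fderiv_slice_eq_zero {q : E × E × ℂ → ℂ} {z : E} (hq : DifferentiableAt ℂ q (z, 0))
    (h : ∀ᶠ y in 𝓝 z, q (y, 0) = 0) (v : E) : fderiv ℂ q (z, 0) (v, 0) = 0 := by
  have e1 : HasFDerivAt (fun z : E => q (z, 0)) _ z :=
    HasFDerivAt.comp (g := q) z hq.hasFDerivAt (hasFDerivAt_prodMk_left z (0 : E × ℂ))
  simpa using DFunLike.congr_fun
    (e1.unique ((hasFDerivAt_const (0 : ℂ) z).congr_of_eventuallyEq h)) v

namespace IsSegreMap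

variable [FiniteDimensional ℂ E] {q q' : E × E × ℂ → ℂ} {H Ht : E × ℂ → E × ℂ}

theorem not_eventually_comp_eq_zero (h : IsSegreMap q q' H Ht)
    (hl : ¬ ∀ᶠ z in 𝓝 (0 : E), (fderiv ℂ (fun z => (H (z, 0)).1) z).det = 0)
    (hr : ¬ ∀ᶠ z in 𝓝 (0 : E), (fderiv ℂ (fun z => (Ht (z, 0)).1) z).det = 0)
    (hft : ¬ ∀ᶠ p in 𝓝 (0 : E × E), q' (p.1, p.2, 0) = 0) :
    ¬ ∀ᶠ p in 𝓝 (0 : E × E), q' ((H (p.1, 0)).1, (Ht (p.2, 0)).1, 0) = 0 := by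
  have hi : AnalyticAt ℂ (fun z : E => (z, (0 : ℂ))) 0 := analyticAt_id.prod analyticAt_const
  refine HSPMpaper.not_eventually_comp_eq_zero (k := fun p : E × E => q' (p.1, p.2, 0))
    (φ := fun z => (H (z, 0)).1) (ψ := fun z => (Ht (z, 0)).1) ?_ hft ?_ ?_ ?_ ?_ hl hr
  · exact AnalyticAt.fun_comp_of_eq (g := q') h.analyticAt_target
      (analyticAt_fst.prod (analyticAt_snd.prod analyticAt_const)) rfl
  · exact analyticAt_fst.comp (AnalyticAt.fun_comp_of_eq (g := H) h.analyticAt_left hi rfl)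
  · exact analyticAt_fst.comp (AnalyticAt.fun_comp_of_eq (g := Ht) h.analyticAt_right hi rfl)
  · exact congrArg Prod.fst h.map_zero_left
  · exact congrArg Prod.fst h.map_zero_right

theorem not_eventually_source_eq_zero (h : IsSegreMap q q' H Ht)
    (hl : ¬ ∀ᶠ z in 𝓝 (0 : E), (fderiv ℂ (fun z => (H (z, 0)).1) z).det = 0)
    (hr : ¬ ∀ᶠ z in 𝓝 (0 : E), (fderiv ℂ (fun z => (Ht (z, 0)).1) z).det = 0)
    (hft : ¬ ∀ᶠ p in 𝓝 (0 : E × E), q' (p.1, p.2, 0) = 0) :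
    ¬ ∀ᶠ p in 𝓝 (0 : E × E), q (p.1, p.2, 0) = 0 := by
  intro hq
  have : CompleteSpace E := FiniteDimensional.complete ℂ E
  refine h.not_eventually_comp_eq_zero hl hr hft ?_
  obtain ⟨r, hr, -, hp⟩ := h.exists_radius
  have t : Tendsto (fun p : E × E => (p.1, p.2, (0 : ℂ))) (𝓝 0) (𝓝 0) :=
    (show Continuous fun p : E × E => (p.1, p.2, (0 : ℂ)) by fun_prop).tendsto 0
  filter_upwards [hq, t.eventually (Metric.ball_mem_nhds 0 hr)] with p hp0 hpr
  obtain ⟨h1, -, -, -, h5, h6, -⟩ := hp _ hpr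
  have := h1.eventually_eq.self_of_nhds
  dsimp only at this h5 h6
  rw [hp0, h5] at this
  have e : Ht (p.2, 0) = ((Ht (p.2, 0)).1, 0) := Prod.ext rfl h6
  rw [← e]
  exact this.symm

theorem not_eventually_transversality_eq_zero (h : IsSegreMap q q' H Ht)
    (hl : ¬ ∀ᶠ z in 𝓝 (0 : E), (fderiv ℂ (fun z => (H (z, 0)).1) z).det = 0)
    (hr : ¬ ∀ᶠ z in 𝓝 (0 : E), (fderiv ℂ (fun z => (Ht (z, 0)).1) z).det = 0)
    (hft : ¬ ∀ᶠ p in 𝓝 (0 : E × E), q' (p.1, p.2, 0) = 0) :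
    ¬ ∀ᶠ p in 𝓝 (0 : E × E × ℂ), transversality q q' H Ht p = 0 := by
  intro ha
  have : CompleteSpace E := FiniteDimensional.complete ℂ E
  obtain ⟨r, hr0, hV, hp⟩ := h.exists_radius
  have ha' := eq_zero_of_eventually_eq_zero
    (fun p hpr => (hp p hpr).1.analyticAt_transversality) (Metric.mem_ball_self hr0) ha
  obtain ⟨z, hz, hdet⟩ := exists_mem_ball_det_ne_zero hl hr0
  set p₀ : E × E × ℂ := (z, 0) with hp₀
  have hp₀r : p₀ ∈ Metric.ball (0 : E × E × ℂ) r := by simpa [hp₀, Prod.norm_def] using hz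
  obtain ⟨g1, -, g3, g4, -⟩ := hp p₀ hp₀r
  have hq₀ : q p₀ = 0 := g3
  -- the graph map over the right factor is open at `p₀`
  have e1 : HasStrictFDerivAt (fun x : E × E × ℂ => (x.1, q x)) _ p₀ :=
    hasStrictFDerivAt_fst.prodMk g1.analyticAt_source.hasStrictFDerivAt
  have e2 : HasStrictFDerivAt (fun x : E × E × ℂ => H (x.1, q x)) _ p₀ :=
    HasStrictFDerivAt.comp (g := H) p₀ g1.analyticAt_left.hasStrictFDerivAt e1
  have e3 : HasStrictFDerivAt (fun x : E × E × ℂ => ((H (x.1, q x)).1, x.2)) _ p₀ :=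
    e2.fst.prodMk hasStrictFDerivAt_snd
  have hqz : ∀ v : E, fderiv ℂ q p₀ (v, 0) = 0 := by
    refine fderiv_slice_eq_zero g1.analyticAt_source.differentiableAt ?_
    filter_upwards [Metric.isOpen_ball.mem_nhds hz] with y hy
    exact (hp (y, 0) (by simpa [Prod.norm_def] using hy)).2.2.1
  have hmap := e3.map_nhds_eq_of_surj (LinearMap.range_eq_top.2 (by
    rintro ⟨y, ω⟩
    obtain ⟨x, hx⟩ := surjective_of_det_ne_zero hdet
      (y - (fderiv ℂ H (z, 0) (0, fderiv ℂ q p₀ (0, ω))).1)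
    rw [fderiv_slice (hV (z, 0) (by simpa [Prod.norm_def] using hz)).1.differentiableAt] at hx
    refine ⟨(x, ω), ?_⟩
    have e : ((x, ω) : E × E × ℂ) = (x, 0) + (0, ω) := by simp
    have e' : ((x, fderiv ℂ q p₀ (0, ω)) : E × ℂ) = (x, 0) + (0, fderiv ℂ q p₀ (0, ω)) := by simp
    have e'' : fderiv ℂ q p₀ (x, ω) = fderiv ℂ q p₀ (0, ω) := by
      rw [e, map_add, hqz, zero_add]
    have : (p₀.1, q p₀) = (z, (0 : ℂ)) := by rw [hq₀]
    ext1
    · simp [this, e'']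
      rw [e', map_add, Prod.fst_add, hx]
      simp
    · simp))
  have hev : ∀ᶠ y in 𝓝 ((H (p₀.1, q p₀)).1, p₀.2),
      DifferentiableAt ℂ (fun ω => q' (y.1, Ht ω)) y.2 ∧
        fderiv ℂ (fun ω => q' (y.1, Ht ω)) y.2 = 0 := by
    rw [← hmap]
    refine eventually_map.2 ?_
    filter_upwards [Metric.isOpen_ball.mem_nhds hp₀r] with p hpr
    have hg := (hp p hpr).1
    have e4 : HasFDerivAt (fun ω => q' ((H (p.1, q p)).1, Ht ω)) _ p.2 :=
      HasFDerivAt.comp (g := q') p.2 hg.analyticAt_target.differentiableAt.hasFDerivAt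
        ((hasFDerivAt_const _ _).prodMk hg.analyticAt_right.differentiableAt.hasFDerivAt)
    refine ⟨e4.differentiableAt, ?_⟩
    rw [e4.fderiv]
    refine ContinuousLinearMap.ext fun v => ?_
    simpa [ha' p hpr] using (hg.fderiv_mul_transversality v).symm
  have hzero : ∀ᶠ y in 𝓝 ((H (p₀.1, q p₀)).1, p₀.2), q' (y.1, Ht y.2) = 0 := by
    obtain ⟨ε, hε, hball⟩ := Metric.eventually_nhds_iff_ball.1 hev
    filter_upwards [Metric.ball_mem_nhds _ hε, (continuous_fst.tendsto
      ((H (p₀.1, q p₀)).1, p₀.2)).eventually g4] with y hy hy0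
    have hy' := hy
    rw [← ball_prod_same, Set.mem_prod] at hy'
    have hmem : ∀ ω ∈ Metric.ball (0 : E × ℂ) ε,
        (y.1, ω) ∈ Metric.ball ((H (p₀.1, q p₀)).1, p₀.2) ε := fun ω hω => by
      rw [← ball_prod_same]
      exact ⟨hy'.1, hω⟩
    let _ : NormedSpace ℝ (E × ℂ) := NormedSpace.restrictScalars ℝ ℂ (E × ℂ)
    have := Metric.isOpen_ball.is_const_of_fderiv_eq_zero (𝕜 := ℂ)
      (f := fun ω => q' (y.1, Ht ω)) (convex_ball (0 : E × ℂ) ε).isPreconnected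
      (fun ω hω => (hball _ (hmem ω hω)).1.differentiableWithinAt)
      (fun ω hω => (hball _ (hmem ω hω)).2) hy'.2 (Metric.mem_ball_self hε)
    rw [this, h.map_zero_right, hy0]
  have t : Tendsto (fun x : E × E => ((H (x.1, 0)).1, x.2, (0 : ℂ))) (𝓝 (z, 0))
      (𝓝 ((H (p₀.1, q p₀)).1, p₀.2)) := by
    rw [hq₀]
    have s1 : Tendsto (fun x : E × E => (x.1, (0 : ℂ))) (𝓝 (z, 0)) (𝓝 (z, 0)) :=
      (show Continuous fun x : E × E => (x.1, (0 : ℂ)) by fun_prop).tendsto (z, 0)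
    have s2 : Tendsto (fun x : E × E => (x.2, (0 : ℂ))) (𝓝 (z, 0)) (𝓝 0) :=
      (show Continuous fun x : E × E => (x.2, (0 : ℂ)) by fun_prop).tendsto (z, 0)
    have s3 := (hV (z, 0) (by simpa [Prod.norm_def] using hz)).1.continuousAt.tendsto.comp s1
    exact ((continuous_fst.tendsto _).comp s3).prodMk_nhds s2
  have hball : ∀ x ∈ Metric.ball (0 : E × E) r,
      (x.1, x.2, (0 : ℂ)) ∈ Metric.ball (0 : E × E × ℂ) r := fun x hx => by
    simpa [Prod.norm_def] using hx
  have hzr : (z, (0 : E)) ∈ Metric.ball (0 : E × E) r := by simpa [Prod.norm_def] using hz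
  refine h.not_eventually_comp_eq_zero hl hr hft ?_
  filter_upwards [Metric.ball_mem_nhds 0 hr0]
  refine eq_zero_of_eventually_eq_zero (fun x hx => ?_) hzr ?_
  · obtain ⟨-, -, -, -, -, g6, g7⟩ := hp _ (hball x hx)
    have hx1 : (x.1, (0 : ℂ)) ∈ Metric.ball (0 : E × ℂ) r := by
      have := (norm_fst_le x).trans_lt (mem_ball_zero_iff.1 hx)
      simpa [Prod.norm_def] using this
    have hx2 : (x.2, (0 : ℂ)) ∈ Metric.ball (0 : E × ℂ) r := by
      have := (norm_snd_le x).trans_lt (mem_ball_zero_iff.1 hx)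
      simpa [Prod.norm_def] using this
    have s1 : AnalyticAt ℂ (fun x : E × E => (H (x.1, 0)).1) x :=
      analyticAt_fst.comp (AnalyticAt.fun_comp_of_eq (g := H) (hV _ hx1).1
        (analyticAt_fst.prod analyticAt_const) rfl)
    have s2 : AnalyticAt ℂ (fun x : E × E => (Ht (x.2, 0)).1) x :=
      analyticAt_fst.comp (AnalyticAt.fun_comp_of_eq (g := Ht) (hV _ hx2).2
        (analyticAt_snd.prod analyticAt_const) rfl)
    exact AnalyticAt.fun_comp_of_eq (g := q') g7 (s1.prod (s2.prod analyticAt_const))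
      (Prod.ext rfl (Prod.ext rfl g6.symm))
  · filter_upwards [t.eventually hzero, Metric.isOpen_ball.mem_nhds hzr] with x hx hxr
    obtain ⟨-, -, -, -, -, g6, -⟩ := hp _ (hball x hxr)
    have e : Ht (x.2, 0) = ((Ht (x.2, 0)).1, 0) := Prod.ext rfl g6
    rw [← e]
    exact hx

end IsSegreMap

theorem eventually_injective {X V : Type*} [TopologicalSpace X] [NormedAddCommGroup V]
    [NormedSpace ℂ V] [FiniteDimensional ℂ V] {N : X → V →L[ℂ] V} {x : X}
    (hN : ContinuousAt N x) (h : ∀ v, N x v = 0 → v = 0) :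
    ∀ᶠ y in 𝓝 x, ∀ v, N y v = 0 → v = 0 := by
  have : ContinuousAt (fun y => (N y).det) x :=
    ContinuousLinearMap.continuous_det.continuousAt.comp hN
  filter_upwards [this.eventually_ne (det_ne_zero_of_injective h)] with y hy v hv
  exact eq_zero_of_det_ne_zero hy hv

namespace IsSegreMap

variable [FiniteDimensional ℂ E] {q q' : E × E × ℂ → ℂ} {H Ht : E × ℂ → E × ℂ}

theorem not_eventually_det_left_eq_zero (h : IsSegreMap q q' H Ht)
    (hl : ¬ ∀ᶠ z in 𝓝 (0 : E), (fderiv ℂ (fun z => (H (z, 0)).1) z).det = 0)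
    (hr : ¬ ∀ᶠ z in 𝓝 (0 : E), (fderiv ℂ (fun z => (Ht (z, 0)).1) z).det = 0)
    (hft : ¬ ∀ᶠ p in 𝓝 (0 : E × E), q' (p.1, p.2, 0) = 0) :
    ¬ ∀ᶠ v in 𝓝 (0 : E × ℂ), (fderiv ℂ H v).det = 0 := by
  intro hdet
  have : CompleteSpace E := FiniteDimensional.complete ℂ E
  obtain ⟨r, hr0, hV, hp⟩ := h.exists_radius
  refine h.not_eventually_transversality_eq_zero hl hr hft ?_
  filter_upwards [Metric.ball_mem_nhds 0 hr0]
  obtain ⟨z, hz, hzd⟩ := exists_mem_ball_det_ne_zero hl hr0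
  have hzr : ((z, 0) : E × E × ℂ) ∈ Metric.ball (0 : E × E × ℂ) r := by
    simpa [Prod.norm_def] using hz
  have hzr' : ((z, 0) : E × ℂ) ∈ Metric.ball (0 : E × ℂ) r := by
    simpa [Prod.norm_def] using hz
  refine eq_zero_of_eventually_eq_zero (fun p hpr => (hp p hpr).1.analyticAt_transversality) hzr ?_
  have hJ := eq_zero_of_eventually_eq_zero (fun v hv => analyticAt_det (hV v hv).1.fderiv)
    (Metric.mem_ball_self hr0) hdet
  obtain ⟨g1, -, hq0, -⟩ := hp _ hzr
  replace hq0 : q (z, 0) = 0 := hq0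
  have hqz : ∀ v : E, fderiv ℂ q (z, 0) (v, 0) = 0 := by
    refine fderiv_slice_eq_zero g1.analyticAt_source.differentiableAt ?_
    filter_upwards [Metric.isOpen_ball.mem_nhds hz] with y hy
    exact (hp (y, 0) (by simpa [Prod.norm_def] using hy)).2.2.1
  have hc : ContinuousAt (fun p : E × E × ℂ => (p.1, q p)) (z, 0) :=
    continuousAt_fst.prodMk g1.analyticAt_source.continuousAt
  have hcH : ContinuousAt (fun p : E × E × ℂ => fderiv ℂ H (p.1, q p)) (z, 0) :=
    ContinuousAt.comp (g := fderiv ℂ H) g1.analyticAt_left.fderiv.continuousAt hc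
  have hcq := g1.analyticAt_source.fderiv.continuousAt
  have key := eventually_injective (x := ((z, 0) : E × E × ℂ))
    (N := fun p => (ContinuousLinearMap.inl ℂ E ℂ ∘L ContinuousLinearMap.fst ℂ E ℂ) ∘L
        fderiv ℂ H (p.1, q p) + ContinuousLinearMap.inr ℂ E ℂ ∘L (ContinuousLinearMap.snd ℂ E ℂ -
        fderiv ℂ q p ∘L (ContinuousLinearMap.inl ℂ E (E × ℂ) ∘L ContinuousLinearMap.fst ℂ E ℂ)))
    ((continuousAt_const.clm_comp hcH).add (continuousAt_const.clm_comp
      (continuousAt_const.sub (hcq.clm_comp continuousAt_const)))) (by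
      rintro ⟨x, ω⟩ hv
      simp [hq0, hqz] at hv
      obtain ⟨hv, rfl⟩ := hv
      rw [← fderiv_slice (hV _ hzr').1.differentiableAt] at hv
      rw [eq_zero_of_det_ne_zero hzd hv]
      rfl)
  have hqr : ∀ᶠ p : E × E × ℂ in 𝓝 (z, 0), (p.1, q p) ∈ Metric.ball (0 : E × ℂ) r :=
    hc.eventually (Metric.isOpen_ball.mem_nhds (by simpa [hq0] using hzr'))
  filter_upwards [key, hqr, Metric.isOpen_ball.mem_nhds hzr] with p h1 h2 h3
  refine (hp p h3).1.transversality_eq_zero_of_left (hJ _ h2) fun v hv hv' => h1 v ?_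
  simp [hv, hv']

theorem not_eventually_det_right_eq_zero (h : IsSegreMap q q' H Ht)
    (hl : ¬ ∀ᶠ z in 𝓝 (0 : E), (fderiv ℂ (fun z => (H (z, 0)).1) z).det = 0)
    (hr : ¬ ∀ᶠ z in 𝓝 (0 : E), (fderiv ℂ (fun z => (Ht (z, 0)).1) z).det = 0)
    (hft : ¬ ∀ᶠ p in 𝓝 (0 : E × E), q' (p.1, p.2, 0) = 0) :
    ¬ ∀ᶠ v in 𝓝 (0 : E × ℂ), (fderiv ℂ Ht v).det = 0 := by
  intro hdet
  have : CompleteSpace E := FiniteDimensional.complete ℂ E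
  obtain ⟨r, hr0, hV, hp⟩ := h.exists_radius
  refine h.not_eventually_transversality_eq_zero hl hr hft ?_
  filter_upwards [Metric.ball_mem_nhds 0 hr0]
  obtain ⟨z, hz, hzd⟩ := exists_mem_ball_det_ne_zero hr hr0
  have hzr : ((0, z, 0) : E × E × ℂ) ∈ Metric.ball (0 : E × E × ℂ) r := by
    simpa [Prod.norm_def] using hz
  have hzr' : ((z, 0) : E × ℂ) ∈ Metric.ball (0 : E × ℂ) r := by
    simpa [Prod.norm_def] using hz
  refine eq_zero_of_eventually_eq_zero (fun p hpr => (hp p hpr).1.analyticAt_transversality) hzr ?_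
  have hJ := eq_zero_of_eventually_eq_zero (fun v hv => analyticAt_det (hV v hv).2.fderiv)
    (Metric.mem_ball_self hr0) hdet
  have g1 := (hp _ hzr).1
  have hqz : ∀ v : E × ℂ, fderiv ℂ q (0, z, 0) (0, v) = v.2 := by
    have e1 : HasFDerivAt (fun v : E × ℂ => q (0, v)) _ (z, 0) :=
      HasFDerivAt.comp (g := q) (z, (0 : ℂ)) g1.analyticAt_source.differentiableAt.hasFDerivAt
        (hasFDerivAt_prodMk_right (0 : E) (z, (0 : ℂ)))
    have e2 : (fun v : E × ℂ => q (0, v)) =ᶠ[𝓝 (z, 0)] Prod.snd := by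
      filter_upwards [Metric.isOpen_ball.mem_nhds hzr'] with v hv
      exact (hp (0, v) (by simpa [Prod.norm_def] using hv)).2.1
    intro v
    simpa using (DFunLike.congr_fun ((hasFDerivAt_snd.congr_of_eventuallyEq e2).unique e1) v).symm
  have hcH : ContinuousAt (fun p : E × E × ℂ => fderiv ℂ Ht p.2) (0, z, 0) :=
    ContinuousAt.comp (g := fderiv ℂ Ht) g1.analyticAt_right.fderiv.continuousAt continuousAt_snd
  have hcq := g1.analyticAt_source.fderiv.continuousAt
  have key := eventually_injective (x := ((0, z, 0) : E × E × ℂ))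
    (N := fun p => (ContinuousLinearMap.inl ℂ E ℂ ∘L ContinuousLinearMap.fst ℂ E ℂ) ∘L
        fderiv ℂ Ht p.2 + ContinuousLinearMap.inr ℂ E ℂ ∘L
        (fderiv ℂ q p ∘L ContinuousLinearMap.inr ℂ E (E × ℂ)))
    ((continuousAt_const.clm_comp hcH).add (continuousAt_const.clm_comp
      (hcq.clm_comp continuousAt_const))) (by
      rintro ⟨x, ω⟩ hv
      simp [hqz] at hv
      obtain ⟨hv, rfl⟩ := hv
      rw [← fderiv_slice (hV _ hzr').2.differentiableAt] at hv
      rw [eq_zero_of_det_ne_zero hzd hv]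
      rfl)
  filter_upwards [key, Metric.isOpen_ball.mem_nhds hzr] with p h1 h3
  have h2 : p.2 ∈ Metric.ball (0 : E × ℂ) r :=
    mem_ball_zero_iff.2 ((norm_snd_le p).trans_lt (mem_ball_zero_iff.1 h3))
  refine (hp p h3).1.transversality_eq_zero_of_right (hJ _ h2) fun v hv hv' => h1 v ?_
  simp [hv, hv']

end IsSegreMap

theorem isPreconnected_setOf_smul_mem_ball (z : E) (r : ℝ) :
    IsPreconnected {s : ℂ | s • z ∈ Metric.ball (0 : E) r} := by
  let _ : NormedSpace ℝ E := NormedSpace.restrictScalars ℝ ℂ E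
  exact ((convex_ball (0 : E) r).is_linear_preimage (f := fun s : ℂ => s • z)
    ⟨fun a b => add_smul a b z, fun a b => smul_assoc a b z⟩).isPreconnected

theorem isOpen_setOf_smul_mem_ball (z : E) (r : ℝ) :
    IsOpen {s : ℂ | s • z ∈ Metric.ball (0 : E) r} :=
  Metric.isOpen_ball.preimage (show Continuous fun s : ℂ => s • z by fun_prop)

theorem frequently_ne_zero_of_not_eventually_eq_zero {F : E → ℂ} {r : ℝ}
    (hF : ∀ x ∈ Metric.ball (0 : E) r, AnalyticAt ℂ F x) (h : ¬ ∀ᶠ x in 𝓝 0, F x = 0) {x : E}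
    (hx : x ∈ Metric.ball (0 : E) r) : ∃ᶠ y in 𝓝 x, F y ≠ 0 := by
  refine not_eventually.1 fun h0 => h ?_
  filter_upwards [Metric.ball_mem_nhds 0 (Metric.pos_of_mem_ball hx)] using
    eq_zero_of_eventually_eq_zero hF hx h0

theorem mk_mem_ball_zero {V W : Type*} [NormedAddCommGroup V] [NormedAddCommGroup W] {r : ℝ}
    {v : V} {w : W} (hv : v ∈ Metric.ball (0 : V) r) (hw : w ∈ Metric.ball (0 : W) r) :
    (v, w) ∈ Metric.ball (0 : V × W) r := by
  rw [mem_ball_zero_iff] at *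
  exact max_lt hv hw

theorem mem_ball_zero_of_mk {V W : Type*} [NormedAddCommGroup V] [NormedAddCommGroup W] {r : ℝ}
    {p : V × W} (hp : p ∈ Metric.ball (0 : V × W) r) :
    p.1 ∈ Metric.ball (0 : V) r ∧ p.2 ∈ Metric.ball (0 : W) r := by
  simp only [mem_ball_zero_iff] at *
  exact max_lt_iff.1 hp

namespace IsSegreMap

variable {q q' : E × E × ℂ → ℂ} {H Ht : E × ℂ → E × ℂ}

theorem fderiv_snd_ne_zero (h : IsSegreMap q q' H Ht)
    (ha : transversality q q' H Ht 0 ≠ 0) : (fderiv ℂ H 0 (0, 1)).2 ≠ 0 := by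
  have hq0 : q 0 = 0 := h.source_left.self_of_nhds
  have t : Tendsto (fun z : E => (z, (0 : E × ℂ))) (𝓝 0) (𝓝 0) :=
    (show Continuous fun z : E => (z, (0 : E × ℂ)) by fun_prop).tendsto 0
  have e := fderiv_slice_eq_zero (z := 0) h.analyticAt_target.differentiableAt
    (t.eventually h.target_right) (fderiv ℂ H 0 (0, 1)).1
  have e1 : ((0 : E × E × ℂ).1, q 0) = 0 := by rw [hq0]; rfl
  have e2 : ((H 0).1, Ht (0 : E × E × ℂ).2) = (0, 0) := by
    rw [h.map_zero_left, Prod.snd_zero, h.map_zero_right]; rfl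
  rwa [transversality, e1, e2, e, sub_zero] at ha

variable [FiniteDimensional ℂ E]

theorem transversality_zero_ne_zero (h : IsSegreMap q q' H Ht)
    (hl : ¬ ∀ᶠ z in 𝓝 (0 : E), (fderiv ℂ (fun z => (H (z, 0)).1) z).det = 0)
    (hr : ¬ ∀ᶠ z in 𝓝 (0 : E), (fderiv ℂ (fun z => (Ht (z, 0)).1) z).det = 0)
    (hft : ¬ ∀ᶠ p in 𝓝 (0 : E × E), q' (p.1, p.2, 0) = 0) {σ : E × E × ℂ → ℂ}
    (hσ : ∀ᶠ p in 𝓝 0, DifferentiableAt ℂ σ p)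
    (hσl : ∀ᶠ p in 𝓝 (0 : E × E × ℂ), σ (0, p.2) = p.2.2)
    (hσr : ∀ᶠ p in 𝓝 (0 : E × E × ℂ), σ (p.1, 0, p.2.2) = p.2.2)
    (hqσ : ∀ᶠ p in 𝓝 (0 : E × E × ℂ), q (p.1, p.2.1, σ p) = p.2.2) :
    transversality q q' H Ht 0 ≠ 0 := by
  intro h0
  have : CompleteSpace E := FiniteDimensional.complete ℂ E
  obtain ⟨r, hr0, hV, hp⟩ := h.exists_radius
  set a := transversality q q' H Ht with ha_def
  have ha : ∀ p ∈ Metric.ball (0 : E × E × ℂ) r, AnalyticAt ℂ a p :=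
    fun p hpr => (hp p hpr).1.analyticAt_transversality
  have hJ : ∀ v ∈ Metric.ball (0 : E × ℂ) r, AnalyticAt ℂ (fun v => (fderiv ℂ H v).det) v :=
    fun v hv => analyticAt_det (hV v hv).1.fderiv
  have hJt : ∀ v ∈ Metric.ball (0 : E × ℂ) r, AnalyticAt ℂ (fun v => (fderiv ℂ Ht v).det) v :=
    fun v hv => analyticAt_det (hV v hv).2.fderiv
  have hJ0 : ∀ v ∈ Metric.ball (0 : E × ℂ) r, ∃ᶠ y in 𝓝 v, (fderiv ℂ H y).det ≠ 0 :=
    fun v hv => frequently_ne_zero_of_not_eventually_eq_zero hJ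
      (h.not_eventually_det_left_eq_zero hl hr hft) hv
  have hJt0 : ∀ v ∈ Metric.ball (0 : E × ℂ) r, ∃ᶠ y in 𝓝 v, (fderiv ℂ Ht y).det ≠ 0 :=
    fun v hv => frequently_ne_zero_of_not_eventually_eq_zero hJt
      (h.not_eventually_det_right_eq_zero hl hr hft) hv
  -- `a` vanishes along the Segre variety of the origin
  have ha1 : ∀ z ∈ Metric.ball (0 : E) r, a (z, 0) = 0 := by
    intro z hz
    have h01 : (0 : E × ℂ) ∈ Metric.ball (0 : E × ℂ) r := Metric.mem_ball_self hr0
    have := eq_zero_of_frequently_ne_zero (F := fun s ω => a (s • z, ω)) (x₀ := (0 : E × ℂ))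
      (isOpen_setOf_smul_mem_ball z r) (isPreconnected_setOf_smul_mem_ball z r) ?_ ?_ ?_
      (s₀ := 0) (by simpa using hr0) (by rw [zero_smul]; exact h0) 1 (by simpa using hz)
    · simpa using this
    · filter_upwards [Metric.isOpen_ball.mem_nhds h01] with ω hω s hs
      exact ((ha _ (mk_mem_ball_zero hs hω)).differentiableAt.comp s
        (show DifferentiableAt ℂ (fun s : ℂ => (s • z, ω)) s by fun_prop)).differentiableWithinAt
    · intro s hs
      exact ContinuousAt.comp (g := a) (f := fun p : (E × ℂ) × ℂ => (p.2 • z, p.1))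
        (ha _ (mk_mem_ball_zero hs h01)).continuousAt (by fun_prop)
    · refine ((hJt0 0 h01).and_eventually (Metric.isOpen_ball.mem_nhds h01)).mono ?_
      rintro ω ⟨h1, h2⟩ s hs h3
      exact h1 ((hp _ (mk_mem_ball_zero hs h2)).1.det_right_eq_zero h3)
  have hσ0 : σ 0 = 0 := hσl.self_of_nhds
  have t : Tendsto (fun p : E × E × ℂ => (p.1, p.2.1, σ p)) (𝓝 0) (𝓝 0) := by
    have := hσ.self_of_nhds.continuousAt.tendsto
    rw [hσ0] at this
    exact (continuous_fst.tendsto (0 : E × E × ℂ)).prodMk_nhds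
      (((continuous_fst.comp continuous_snd).tendsto (0 : E × E × ℂ)).prodMk_nhds this)
  obtain ⟨ρ, hρ0, hρ⟩ := Metric.eventually_nhds_iff_ball.1
    (hσ.and (hσl.and (hσr.and (hqσ.and ((t.eventually (Metric.ball_mem_nhds 0 hr0)).and
      (Metric.ball_mem_nhds 0 hr0))))))
  have hρr : ∀ {v : E × ℂ}, v ∈ Metric.ball (0 : E × ℂ) ρ → v ∈ Metric.ball (0 : E × ℂ) r :=
    fun {v} hv => (mem_ball_zero_of_mk
      (hρ (0, v) (mk_mem_ball_zero (Metric.mem_ball_self hρ0) hv)).2.2.2.2.2).2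
  have h0ρ : (0 : ℂ) ∈ Metric.ball (0 : ℂ) ρ := Metric.mem_ball_self hρ0
  -- the Jacobian of `Ht` vanishes on the second Segre set
  have key : ∀ z ∈ Metric.ball (0 : E) ρ, ∀ χ ∈ Metric.ball (0 : E) ρ,
      (fderiv ℂ Ht (χ, σ (z, χ, 0))).det = 0 := by
    intro z hz χ hχ
    have hz0 := mk_mem_ball_zero hz h0ρ
    have hmem : ∀ v ∈ Metric.ball (0 : E × ℂ) ρ, ∀ s ∈ {s : ℂ | s • χ ∈ Metric.ball (0 : E) ρ},
        (v.1, s • χ, v.2) ∈ Metric.ball (0 : E × E × ℂ) ρ := fun v hv s hs =>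
      mk_mem_ball_zero (mem_ball_zero_of_mk hv).1 (mk_mem_ball_zero hs (mem_ball_zero_of_mk hv).2)
    have := eq_zero_of_frequently_ne_zero (x₀ := (z, (0 : ℂ)))
      (F := fun s v => a (v.1, s • χ, σ (v.1, s • χ, v.2)))
      (isOpen_setOf_smul_mem_ball χ ρ) (isPreconnected_setOf_smul_mem_ball χ ρ) ?_ ?_ ?_
      (s₀ := 0) (by simpa using hρ0) ?_ 1 (by simpa using hχ)
    · simp only [one_smul] at this
      exact (hp _ (hρ _ (mk_mem_ball_zero hz (mk_mem_ball_zero hχ h0ρ))).2.2.2.2.1).1.det_right_eq_zero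
        this
    · filter_upwards [Metric.isOpen_ball.mem_nhds hz0] with v hv s hs
      obtain ⟨b1, -, -, -, b2, -⟩ := hρ _ (hmem v hv s hs)
      have e1 : DifferentiableAt ℂ (fun s : ℂ => σ (v.1, s • χ, v.2)) s :=
        DifferentiableAt.comp (g := σ) (f := fun s : ℂ => (v.1, s • χ, v.2)) s b1 (by fun_prop)
      exact (DifferentiableAt.comp (g := a) (f := fun s : ℂ => (v.1, s • χ, σ (v.1, s • χ, v.2))) s
        (ha _ b2).differentiableAt (by fun_prop)).differentiableWithinAt
    · intro s hs
      obtain ⟨b1, -, -, -, b2, -⟩ := hρ _ (hmem _ hz0 s hs)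
      have e1 : ContinuousAt (fun p : (E × ℂ) × ℂ => σ (p.1.1, p.2 • χ, p.1.2)) ((z, 0), s) :=
        ContinuousAt.comp (g := σ) (f := fun p : (E × ℂ) × ℂ => (p.1.1, p.2 • χ, p.1.2))
          b1.continuousAt (by fun_prop)
      exact ContinuousAt.comp (g := a)
        (f := fun p : (E × ℂ) × ℂ => (p.1.1, p.2 • χ, σ (p.1.1, p.2 • χ, p.1.2)))
        (ha _ b2).continuousAt (ContinuousAt.prodMk (by fun_prop)
          (ContinuousAt.prodMk (by fun_prop) e1))
    · refine ((hJ0 _ (hρr hz0)).and_eventually (Metric.isOpen_ball.mem_nhds hz0)).mono ?_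
      rintro v ⟨h1, h2⟩ s hs h3
      obtain ⟨-, -, -, b1, b2, -⟩ := hρ _ (hmem v h2 s hs)
      have := (hp _ b2).1.det_left_eq_zero h3
      dsimp only at this b1
      rw [b1] at this
      exact h1 this
    · have e := (hρ (z, 0) (mk_mem_ball_zero hz (Metric.mem_ball_self hρ0))).2.2.1
      dsimp only [Prod.snd_zero] at e
      simp only [zero_smul, e]
      exact ha1 z (mem_ball_zero_of_mk (hρr hz0)).1
  obtain ⟨z, χ, hz, hχ, hne⟩ : ∃ z χ : E, z ∈ Metric.ball (0 : E) ρ ∧ χ ∈ Metric.ball (0 : E) ρ ∧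
      σ (z, χ, 0) ≠ 0 := by
    by_contra! H0
    refine h.not_eventually_source_eq_zero hl hr hft ?_
    filter_upwards [Metric.ball_mem_nhds 0 hρ0] with p hpρ
    obtain ⟨h1, h2⟩ := mem_ball_zero_of_mk hpρ
    have := (hρ _ (mk_mem_ball_zero h1 (mk_mem_ball_zero h2 h0ρ))).2.2.2.1
    dsimp only at this
    rwa [H0 _ _ h1 h2] at this
  have hχr := hρr (mk_mem_ball_zero hχ h0ρ)
  have hcσ : ContinuousAt (fun v : E × ℂ => σ (z, v.1, 0)) (χ, 0) :=
    ContinuousAt.comp (g := σ) (f := fun v : E × ℂ => (z, v.1, (0 : ℂ)))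
      (hρ _ (mk_mem_ball_zero hz (mk_mem_ball_zero hχ h0ρ))).1.continuousAt (by fun_prop)
  refine hJt0 _ hχr ?_
  filter_upwards [hcσ.eventually_ne hne, Metric.isOpen_ball.mem_nhds hχr,
    Metric.isOpen_ball.mem_nhds (mk_mem_ball_zero hχ h0ρ)] with v hv1 hv2 hv3
  refine not_not.2 ?_
  have hvχ := (mem_ball_zero_of_mk hv3).1
  have hφ : AnalyticOnNhd ℂ (fun s : ℂ => σ (s • z, v.1, 0))
      {s : ℂ | s • z ∈ Metric.ball (0 : E) ρ} :=
    DifferentiableOn.analyticOnNhd (fun s hs => (DifferentiableAt.comp (g := σ)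
      (f := fun s : ℂ => (s • z, v.1, (0 : ℂ))) s
      (hρ _ (mk_mem_ball_zero hs (mk_mem_ball_zero hvχ h0ρ))).1
      (by fun_prop)).differentiableWithinAt) (isOpen_setOf_smul_mem_ball z ρ)
  have h0U : (0 : ℂ) ∈ {s : ℂ | s • z ∈ Metric.ball (0 : E) ρ} := by simpa using hρ0
  have hφ0 : σ ((0 : ℂ) • z, v.1, 0) = 0 := by
    rw [zero_smul]
    exact (hρ (0, v.1, 0) (mk_mem_ball_zero (Metric.mem_ball_self hρ0)
      (mk_mem_ball_zero hvχ h0ρ))).2.1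
  have hφne : ∀ᶠ s in 𝓝[≠] (0 : ℂ), σ (s • z, v.1, 0) ≠ 0 := by
    refine (hφ 0 h0U).eventually_eq_zero_or_eventually_ne_zero.resolve_left fun h1 => hv1 ?_
    have := hφ.eqOn_zero_of_preconnected_of_eventuallyEq_zero
      (isPreconnected_setOf_smul_mem_ball z ρ) h0U h1
      (show (1 : ℂ) ∈ {s : ℂ | s • z ∈ Metric.ball (0 : E) ρ} by simpa using hz)
    simpa using this
  have hφt : Tendsto (fun s : ℂ => σ (s • z, v.1, 0)) (𝓝[≠] 0) (𝓝[≠] 0) := by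
    refine tendsto_nhdsWithin_iff.2 ⟨?_, hφne⟩
    have := (hφ 0 h0U).continuousAt.tendsto
    rw [hφ0] at this
    exact this.mono_left nhdsWithin_le_nhds
  have hslice : ∀ τ ∈ Metric.ball (0 : ℂ) r,
      AnalyticAt ℂ (fun τ => (fderiv ℂ Ht (v.1, τ)).det) τ := fun τ hτ =>
    AnalyticAt.fun_comp_of_eq (g := fun v => (fderiv ℂ Ht v).det)
      (hJt (v.1, τ) (mk_mem_ball_zero (mem_ball_zero_of_mk hv2).1 hτ))
      (analyticAt_const.prod analyticAt_id) rfl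
  have h0r : (0 : ℂ) ∈ Metric.ball (0 : ℂ) r := Metric.mem_ball_self hr0
  refine eq_zero_of_eventually_eq_zero hslice h0r ?_ v.2 (mem_ball_zero_of_mk hv2).2
  refine (hslice 0 h0r).eventually_eq_zero_or_eventually_ne_zero.resolve_right fun h1 => ?_
  obtain ⟨s, hs1, hs2⟩ := ((hφt.eventually h1).and (nhdsWithin_le_nhds
    ((isOpen_setOf_smul_mem_ball z ρ).mem_nhds h0U))).exists
  exact hs1 (key _ hs2 _ hvχ)

end IsSegreMap

end Segre

theorem det_jacz {f : (Fin n → ℂ) → ℂ → Fin n → ℂ} {z : Fin n → ℂ}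
    (hf : DifferentiableAt ℂ (fun z => f z 0) z) :
    (jacz f z).det = (fderiv ℂ (fun z => f z 0) z).det := by
  rw [ContinuousLinearMap.det, ← LinearMap.det_toMatrix']
  congr 1
  ext i j
  rw [LinearMap.toMatrix'_apply]
  have : HasFDerivAt (fun z => f z 0 i) _ z := (hasFDerivAt_pi'.1 hf.hasFDerivAt) i
  simp [jacz, pd, this.fderiv]

theorem not_eventually_det_fderiv_eq_zero {f : (Fin n → ℂ) → ℂ → Fin n → ℂ}
    (hf : ∀ᶠ p in 𝓝 (0 : (Fin n → ℂ) × ℂ),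
      AnalyticAt ℂ (fun q : (Fin n → ℂ) × ℂ => f q.1 q.2) p)
    (h : ¬ ∀ᶠ z in 𝓝 (0 : Fin n → ℂ), (jacz f z).det = 0) :
    ¬ ∀ᶠ z in 𝓝 (0 : Fin n → ℂ), (fderiv ℂ (fun z => f z 0) z).det = 0 := by
  intro h0
  have t : Tendsto (fun z : Fin n → ℂ => (z, (0 : ℂ))) (𝓝 0) (𝓝 0) :=
    (show Continuous fun z : Fin n → ℂ => (z, (0 : ℂ)) by fun_prop).tendsto 0
  refine h ?_
  filter_upwards [h0, t.eventually hf] with z hz hfz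
  rw [det_jacz (DifferentiableAt.comp (g := fun q : (Fin n → ℂ) × ℂ => f q.1 q.2)
    (f := fun z => (z, (0 : ℂ))) z
    hfz.differentiableAt (by fun_prop)), hz]

theorem tendsto_star_swap : Tendsto
    (fun p : (Fin n → ℂ) × (Fin n → ℂ) × ℂ => (star p.2.1, star p.1, star p.2.2)) (𝓝 0) (𝓝 0) := by
  have : Continuous fun p : (Fin n → ℂ) × (Fin n → ℂ) × ℂ =>
    (star p.2.1, star p.1, star p.2.2) := by fun_prop
  exact this.tendsto' 0 0 (by simp [Prod.ext_iff])

theorem QBar_eq (Q : (Fin n → ℂ) → (Fin n → ℂ) → ℂ → ℂ) (χ z : Fin n → ℂ) (τ : ℂ) :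
    QBar Q χ z τ = star (Q (star χ) (star z) (star τ)) := rfl

theorem IsNormalDF.eventually_differentiableAt_QBar {Q : (Fin n → ℂ) → (Fin n → ℂ) → ℂ → ℂ}
    (hQ : IsNormalDF Q) : ∀ᶠ p in 𝓝 (0 : (Fin n → ℂ) × (Fin n → ℂ) × ℂ),
      DifferentiableAt ℂ (fun p : (Fin n → ℂ) × (Fin n → ℂ) × ℂ =>
        QBar Q p.2.1 p.1 p.2.2) p := by
  filter_upwards [tendsto_star_swap.eventually hQ.1] with p hp
  have := hp.differentiableAt.star_star
  exact DifferentiableAt.comp (g := star ∘ (fun q : (Fin n → ℂ) × (Fin n → ℂ) × ℂ =>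
    Q q.1 q.2.1 q.2.2) ∘ star) (f := fun p : (Fin n → ℂ) × (Fin n → ℂ) × ℂ =>
      (p.2.1, p.1, p.2.2)) p (by simpa [Prod.star_def] using this) (by fun_prop)

theorem IsNormalDF.eventually_QBar {Q : (Fin n → ℂ) → (Fin n → ℂ) → ℂ → ℂ}
    (hQ : IsNormalDF Q) : ∀ᶠ p in 𝓝 (0 : (Fin n → ℂ) × (Fin n → ℂ) × ℂ),
      QBar Q p.2.1 0 p.2.2 = p.2.2 ∧ QBar Q 0 p.1 p.2.2 = p.2.2 := by
  filter_upwards [tendsto_star_swap.eventually hQ.2] with p hp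
  simp only [QBar_eq, star_zero]
  exact ⟨by rw [hp.2, star_star], by rw [hp.1, star_star]⟩

/-- Theorem 1.1: if `M'` is of finite type at `0` and the HSPM `ℋ` is
totally Segre nondegenerate at `0`, then `ℋ` is Segre transversal to `ℳ'` at `0`. -/
theorem statement0 (n : ℕ) (hn : 1 ≤ n)
    (Q Q' : (Fin n → ℂ) → (Fin n → ℂ) → ℂ → ℂ)
    (hQ : IsRealNormalDF Q) (hQ' : IsRealNormalDF Q')
    (hM' : FiniteType Q')
    (f ft : (Fin n → ℂ) → ℂ → Fin n → ℂ) (g gt : (Fin n → ℂ) → ℂ → ℂ)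
    (hH : IsHSPM Q Q' f g ft gt)
    (hnd : TotallySegreNondeg f ft) :
    SegreTransversal g := by
  obtain ⟨hf, hg, hft, hgt, hf0, hg0, hft0, hgt0, heq⟩ := hH
  have h : IsSegreMap (fun p : (Fin n → ℂ) × (Fin n → ℂ) × ℂ => Q p.1 p.2.1 p.2.2)
      (fun p => Q' p.1 p.2.1 p.2.2) (fun v => (f v.1 v.2, g v.1 v.2))
      (fun v => (ft v.1 v.2, gt v.1 v.2)) :=
    { analyticAt_source := hQ.1.1.self_of_nhds
      source_left := hQ.1.2.mono fun _ hp => hp.1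
      source_right := hQ.1.2.mono fun _ hp => hp.2
      analyticAt_target := hQ'.1.1.self_of_nhds
      target_left := hQ'.1.2.mono fun _ hp => hp.1
      target_right := hQ'.1.2.mono fun _ hp => hp.2
      analyticAt_left := hf.self_of_nhds.prod hg.self_of_nhds
      analyticAt_right := hft.self_of_nhds.prod hgt.self_of_nhds
      map_zero_left := Prod.ext hf0 hg0
      map_zero_right := Prod.ext hft0 hgt0
      eventually_eq := heq }
  have key := h.fderiv_snd_ne_zero (h.transversality_zero_ne_zero
    (not_eventually_det_fderiv_eq_zero hf hnd.1) (not_eventually_det_fderiv_eq_zero hft hnd.2) hM'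
    (σ := fun p => QBar Q p.2.1 p.1 p.2.2) hQ.1.eventually_differentiableAt_QBar
    (hQ.1.eventually_QBar.mono fun _ hp => hp.1) (hQ.1.eventually_QBar.mono fun _ hp => hp.2) hQ.2)
  have e1 : HasFDerivAt (fun w : ℂ => (f 0 w, g 0 w)) _ 0 :=
    HasFDerivAt.comp (g := fun v : (Fin n → ℂ) × ℂ => (f v.1 v.2, g v.1 v.2)) (0 : ℂ)
      h.analyticAt_left.differentiableAt.hasFDerivAt (hasFDerivAt_prodMk_right (0 : Fin n → ℂ) 0)
  rw [SegreTransversal, e1.snd.hasDerivAt.deriv]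
  simpa using key

end HSPMpaper
end

section
/- Let n ≥ 1 and let Q and Q′ be real normal defining functions of dimension n, defining hypersurfaces M and M′ with complexifications ℳ and ℳ′. Assume M is holomorphically nondegenerate at 0, and let ℋ = (f,g,f̃,g̃) be an HSPM sending (ℳ,0) into (ℳ′,0). Then at least one of the following holds: (i) ℋ is transversally null (g ≡ 0 and g̃ ≡ 0 near 0) and Q′(f(z,w), f̃(χ,τ), 0) = 0 for all (z,w) and (χ,τ) near 0 (i.e. ℋ maps a full neighborhood of 0 in ℂ^{2n+2} into ℳ′); or (ii) there exists a point (z₀,w₀,χ₀,τ₀) in the domain of definition with w₀ = Q(z₀,χ₀,τ₀) such that both the Jacobian matrix of (z,w) ↦ (f(z,w),g(z,w)) at (z₀,w₀) and the Jacobian matrix of (χ,τ) ↦ (f̃(χ,τ),g̃(χ,τ)) at (χ₀,τ₀) are invertible (so ℋ is a biholomorphism near a point of ℳ), and moreover M′ is holomorphically nondegenerate at 0. -/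
open Filter Topology Complex

namespace HSPMpaper

variable {n : ℕ}

section General

variable {E F P P' : Type*} [NormedAddCommGroup E] [NormedSpace ℂ E]
  [NormedAddCommGroup F] [NormedSpace ℂ F]
  [NormedAddCommGroup P] [NormedSpace ℂ P] [NormedAddCommGroup P'] [NormedSpace ℂ P']

/-- The derivative of `f` in the constant direction `u`. -/
noncomputable def dirD (u : E) (f : E → ℂ) : E → ℂ := fun x => fderiv ℂ f x u

/-- The iterated derivative of `f` in the directions listed in `l`. -/
noncomputable def dirDs (l : List E) (f : E → ℂ) : E → ℂ := l.foldr dirD f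

@[simp] theorem dirDs_nil (f : E → ℂ) : dirDs [] f = f := rfl

@[simp] theorem dirDs_cons (u : E) (l : List E) (f : E → ℂ) :
    dirDs (u :: l) f = dirD u (dirDs l f) := rfl

theorem dirDs_append (l l' : List E) (f : E → ℂ) :
    dirDs (l ++ l') f = dirDs l (dirDs l' f) := by
  simp [dirDs]

theorem analyticAt_dirD {f : E → ℂ} {x : E} (hf : AnalyticAt ℂ f x) (u : E) :
    AnalyticAt ℂ (dirD u f) x :=
  ((ContinuousLinearMap.apply ℂ ℂ u).analyticAt _).comp hf.fderiv

theorem analyticOnNhd_dirDs {f : E → ℂ} {U : Set E} (hf : AnalyticOnNhd ℂ f U) (l : List E) :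
    AnalyticOnNhd ℂ (dirDs l f) U := by
  induction l with
  | nil => exact hf
  | cons u l ih => exact fun x hx => analyticAt_dirD (ih x hx) u

theorem dirD_congr {f g : E → ℂ} {U : Set E} (hU : IsOpen U) (h : Set.EqOn f g U) (u : E) :
    Set.EqOn (dirD u f) (dirD u g) U := fun x hx => by
  have : f =ᶠ[𝓝 x] g := h.eventuallyEq_of_mem (hU.mem_nhds hx)
  simp only [dirD, this.fderiv_eq]

theorem dirDs_congr {f g : E → ℂ} {U : Set E} (hU : IsOpen U) (h : Set.EqOn f g U)
    (l : List E) : Set.EqOn (dirDs l f) (dirDs l g) U := by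
  induction l with
  | nil => exact h
  | cons u l ih => exact dirD_congr hU ih u

theorem dirDs_zero (l : List E) : dirDs l (0 : E → ℂ) = 0 := by
  induction l with
  | nil => rfl
  | cons u l ih => ext x; simp [ih, dirD]

theorem dirD_comm {f : E → ℂ} {x : E} (hf : AnalyticAt ℂ f x) (u v : E) :
    dirD u (dirD v f) x = dirD v (dirD u f) x := by
  have hd : DifferentiableAt ℂ (fderiv ℂ f) x := hf.fderiv.differentiableAt
  have key : ∀ a b : E, dirD a (dirD b f) x = fderiv ℂ (fderiv ℂ f) x a b := fun a b => by
    have := ((ContinuousLinearMap.apply ℂ ℂ b).hasFDerivAt.comp x hd.hasFDerivAt).fderiv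
    exact congrArg (fun T => T a) this
  rw [key, key]
  exact (hf.contDiffAt (n := ⊤)).isSymmSndFDerivAt_of_omega u v

theorem dirDs_perm {f : E → ℂ} {U : Set E} (hU : IsOpen U) (hf : AnalyticOnNhd ℂ f U)
    {l l' : List E} (h : l.Perm l') : Set.EqOn (dirDs l f) (dirDs l' f) U := by
  induction h with
  | nil => exact fun _ _ => rfl
  | cons u _ ih => exact dirD_congr hU ih u
  | swap u v l => exact fun x hx => dirD_comm (analyticOnNhd_dirDs hf l x hx) _ _
  | trans _ _ h1 h2 => exact h1.trans h2

theorem hasFDerivAt_slice_left {S : E × F → ℂ} {z : E} {q : F}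
    (h : DifferentiableAt ℂ S (z, q)) :
    HasFDerivAt (fun z => S (z, q)) ((fderiv ℂ S (z, q)).comp (.inl ℂ E F)) z :=
  h.hasFDerivAt.comp z (hasFDerivAt_prodMk_left z q)

theorem hasFDerivAt_slice_right {S : E × F → ℂ} {z : E} {q : F}
    (h : DifferentiableAt ℂ S (z, q)) :
    HasFDerivAt (fun q => S (z, q)) ((fderiv ℂ S (z, q)).comp (.inr ℂ E F)) q :=
  h.hasFDerivAt.comp q (hasFDerivAt_prodMk_right z q)

theorem dirDs_slice {S : E × F → ℂ} {U : Set (E × F)} (hU : IsOpen U)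
    (hS : AnalyticOnNhd ℂ S U) (l : List E) {z : E} {q : F} (h : (z, q) ∈ U) :
    dirDs l (fun z => S (z, q)) z = dirDs (l.map fun u => (u, (0 : F))) S (z, q) := by
  induction l generalizing z q with
  | nil => rfl
  | cons u l ih =>
    have hev : dirDs l (fun z => S (z, q)) =ᶠ[𝓝 z]
        fun z => dirDs (l.map fun u => (u, (0 : F))) S (z, q) := by
      have : ∀ᶠ z' in 𝓝 z, (z', q) ∈ U :=
        (Continuous.prodMk_left q).continuousAt.eventually (hU.mem_nhds h)
      filter_upwards [this] with z' hz' using ih hz'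
    simp only [List.map_cons, dirDs_cons, dirD, hev.fderiv_eq]
    rw [(hasFDerivAt_slice_left (analyticOnNhd_dirDs hS _ _ h).differentiableAt).fderiv]
    rfl

theorem fderiv_dirDs_slice {S : E × F → ℂ} {U : Set (E × F)} (hU : IsOpen U)
    (hS : AnalyticOnNhd ℂ S U) (l : List E) {z : E} {q : F} (h : (z, q) ∈ U) (v : F) :
    fderiv ℂ (fun q => dirDs l (fun z => S (z, q)) z) q v =
      dirDs ((0, v) :: l.map fun u => (u, (0 : F))) S (z, q) := by
  have hev : (fun q => dirDs l (fun z => S (z, q)) z) =ᶠ[𝓝 q]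
      fun q => dirDs (l.map fun u => (u, (0 : F))) S (z, q) := by
    have : ∀ᶠ q' in 𝓝 q, (z, q') ∈ U :=
      (Continuous.prodMk_right z).continuousAt.eventually (hU.mem_nhds h)
    filter_upwards [this] with q' hq' using dirDs_slice hU hS l hq'
  rw [hev.fderiv_eq, (hasFDerivAt_slice_right (analyticOnNhd_dirDs hS _ _ h).differentiableAt).fderiv]
  rfl

/-- Differentiation in the parameter commutes with iterated differentiation in the variable. -/
theorem fderiv_dirDs_comm {S : E × F → ℂ} {U : Set (E × F)} (hU : IsOpen U)
    (hS : AnalyticOnNhd ℂ S U) (l : List E) {z : E} {q : F} (h : (z, q) ∈ U) (v : F) :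
    fderiv ℂ (fun q => dirDs l (fun z => S (z, q)) z) q v =
      dirDs l (fun z => fderiv ℂ S (z, q) (0, v)) z := by
  rw [fderiv_dirDs_slice hU hS l h v]
  have hperm : ((0, v) :: l.map fun u => (u, (0 : F))).Perm
      ((l.map fun u => (u, (0 : F))) ++ [(0, v)]) := (List.perm_append_singleton _ _).symm
  rw [dirDs_perm hU hS hperm h, dirDs_append]
  exact (dirDs_slice hU (analyticOnNhd_dirDs hS [(0, v)]) l h).symm

theorem eqOn_zero_of_eventually {f : E → ℂ} {U : Set E} (hf : AnalyticOnNhd ℂ f U)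
    (hU : Convex ℝ U) {x : E} (hx : x ∈ U) (h : ∀ᶠ y in 𝓝 x, f y = 0) : ∀ y ∈ U, f y = 0 :=
  hf.eqOn_zero_of_preconnected_of_eventuallyEq_zero hU.isPreconnected hx h

/-- The ring of germs of analytic functions is a domain. -/
theorem eventually_zero_or_of_mul {f g : E → ℂ} {x : E} (hf : AnalyticAt ℂ f x)
    (hg : AnalyticAt ℂ g x) (h : ∀ᶠ y in 𝓝 x, f y * g y = 0) :
    (∀ᶠ y in 𝓝 x, f y = 0) ∨ ∀ᶠ y in 𝓝 x, g y = 0 := by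
  by_contra! hcon
  obtain ⟨hf0, hg0⟩ := hcon
  obtain ⟨r, hr, hball⟩ := Metric.eventually_nhds_iff_ball.1
    (hf.eventually_analyticAt.and (hg.eventually_analyticAt.and h))
  obtain ⟨y, hy, hyr⟩ := (hf0.and_eventually (Metric.ball_mem_nhds x hr)).exists
  have hg1 : ∀ᶠ y' in 𝓝 y, g y' = 0 := by
    filter_upwards [(hball y hyr).1.continuousAt.eventually_ne hy,
      Metric.isOpen_ball.mem_nhds hyr] with y' h1 h2
    exact (mul_eq_zero.1 (hball y' h2).2.2).resolve_left h1
  have := eqOn_zero_of_eventually (fun z hz => (hball z hz).2.1) (convex_ball x r) hyr hg1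
  exact hg0 (by filter_upwards [Metric.ball_mem_nhds x hr] with z hz; exact not_not.2 (this z hz))

omit [NormedSpace ℂ E] [NormedSpace ℂ F] in
theorem eventually_curry_swap {p : E × F → Prop} {a : E} {b : F}
    (h : ∀ᶠ x in 𝓝 (a, b), p x) : ∀ᶠ y in 𝓝 b, ∀ᶠ x in 𝓝 a, p (x, y) := by
  have : ∀ᶠ x in 𝓝 (b, a), p x.swap :=
    (continuous_swap.tendsto (b, a)).eventually (by simpa using h)
  exact this.curry_nhds

/-- A germ that vanishes on each slice vanishes. -/
theorem eventually_zero_of_slices {h : E × F → ℂ} (hh : AnalyticAt ℂ h 0)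
    (h0 : ∀ᶠ p in 𝓝 (0 : F), ∀ᶠ z in 𝓝 (0 : E), h (z, p) = 0) :
    ∀ᶠ x in 𝓝 0, h x = 0 := by
  obtain ⟨r, hr, hball⟩ := Metric.eventually_nhds_iff_ball.1 hh.eventually_analyticAt
  have h1 : ∀ᶠ p in 𝓝 (0 : F), ∀ z ∈ Metric.ball (0 : E) r, h (z, p) = 0 := by
    filter_upwards [h0, Metric.ball_mem_nhds 0 hr] with p hp hpr
    refine eqOn_zero_of_eventually (fun z hz => ?_) (convex_ball 0 r) (Metric.mem_ball_self hr) hp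
    have : (z, p) ∈ Metric.ball (0 : E × F) r := by
      rw [show (0 : E × F) = (0, 0) from rfl, ← ball_prod_same]; exact ⟨hz, hpr⟩
    exact (hball _ this).comp (f := fun z => (z, p)) (analyticAt_id.prod analyticAt_const)
  have h2 : Metric.ball (0 : E) r ×ˢ {p | ∀ z ∈ Metric.ball (0 : E) r, h (z, p) = 0} ∈ 𝓝 0 :=
    prod_mem_nhds (Metric.ball_mem_nhds (0 : E) hr) h1
  filter_upwards [h2] with x hx using hx.2 x.1 hx.1

/-- If all iterated derivatives of `h` at `a` in the direction `y` vanish, then `h` vanishes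
along the line through `a` with direction `y`. -/
theorem eq_zero_on_line {h : E → ℂ} {U : Set E} (hU : IsOpen U) (hc : Convex ℝ U)
    (hh : AnalyticOnNhd ℂ h U) {a y : E} (ha : a ∈ U)
    (h0 : ∀ k, dirDs (List.replicate k y) h a = 0) {s : ℂ} (hs : a + s • y ∈ U) :
    h (a + s • y) = 0 := by
  set γ : ℂ → E := fun t => a + t • y with hγ
  have hγa : ∀ t, AnalyticAt ℂ γ t := fun t =>
    analyticAt_const.add (analyticAt_id.smul analyticAt_const)
  have hγd : ∀ t, HasDerivAt γ y t := fun t => by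
    simpa [hγ] using ((hasDerivAt_id t).smul_const y).const_add a
  have hT : IsOpen (γ ⁻¹' U) := hU.preimage (by fun_prop)
  have hTc : Convex ℝ (γ ⁻¹' U) := by
    intro t ht t' ht' b c hb hc' hbc
    have := hc ht ht' hb hc' hbc
    simp only [Set.mem_preimage, hγ] at this ⊢
    convert this using 1
    have e : (b : ℂ) + c = 1 := by exact_mod_cast hbc
    have e2 : ∀ (r : ℝ) (x : E), r • x = (r : ℂ) • x := fun r x => rfl
    simp only [e2, smul_add, add_smul, Complex.real_smul, mul_smul]
    calc _ = ((b : ℂ) + c) • a + ((b : ℂ) • t • y + (c : ℂ) • t' • y) := by rw [e, one_smul]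
      _ = _ := by rw [add_smul]; abel
  have hφ : AnalyticOnNhd ℂ (h ∘ γ) (γ ⁻¹' U) := fun t ht =>
    AnalyticAt.comp (hh _ ht) (hγa t)
  have hder : ∀ k, ∀ t ∈ γ ⁻¹' U,
      iteratedDeriv k (h ∘ γ) t = dirDs (List.replicate k y) h (γ t) := by
    intro k
    induction k with
    | zero => intro t _; simp
    | succ k ih =>
      intro t ht
      have hev : iteratedDeriv k (h ∘ γ) =ᶠ[𝓝 t] dirDs (List.replicate k y) h ∘ γ := by
        filter_upwards [hT.mem_nhds ht] with t' ht' using ih t' ht'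
      rw [iteratedDeriv_succ, hev.deriv_eq]
      exact ((analyticOnNhd_dirDs hh _ _ ht).differentiableAt.hasFDerivAt.comp_hasDerivAt t (hγd t)).deriv
  have h0T : (0 : ℂ) ∈ γ ⁻¹' U := by simpa [hγ] using ha
  have htop : analyticOrderAt (h ∘ γ) 0 = ⊤ := by
    rw [ENat.eq_top_iff_forall_ge]
    intro m
    rw [natCast_le_analyticOrderAt_iff_iteratedDeriv_eq_zero (hφ 0 h0T)]
    intro i _
    rw [hder i 0 h0T]
    simpa [hγ] using h0 i
  exact eqOn_zero_of_eventually hφ hTc h0T (analyticOrderAt_eq_top.1 htop) s hs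

end General

section Segre

variable {E P P' : Type*} [NormedAddCommGroup E] [NormedSpace ℂ E]
  [NormedAddCommGroup P] [NormedSpace ℂ P] [NormedAddCommGroup P'] [NormedSpace ℂ P']

/-- For generic parameters `p`, the slices `R(·,p)` move to first order with `p` in every
direction. -/
def SegreNondeg (R : E × P → ℂ) : Prop :=
  ∃ D : P → ℂ, AnalyticAt ℂ D 0 ∧ (¬ ∀ᶠ p in 𝓝 0, D p = 0) ∧
    ∀ᶠ p in 𝓝 0, D p ≠ 0 → ∀ v ≠ 0, ¬ ∀ᶠ z in 𝓝 (0 : E), fderiv ℂ R (z, p) (0, v) = 0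

theorem analyticAt_graph {R : E × P → ℂ} {N : P → P'} {x : E × P} (hR : AnalyticAt ℂ R x)
    (hN : AnalyticAt ℂ N x.2) :
    AnalyticAt ℂ (fun x : E × P => (x.1, R x, N x.2)) x :=
  analyticAt_fst.prod (hR.prod (hN.comp (f := fun x : E × P => x.2) analyticAt_snd))

theorem hasFDerivAt_on_graph {R : E × P → ℂ} {G : E × ℂ × P → ℂ} {x : E × P}
    (hR : DifferentiableAt ℂ R x) (hG : DifferentiableAt ℂ G (x.1, R x, x.2)) (u : E × P) :
    fderiv ℂ (fun x : E × P => G (x.1, R x, x.2)) x u =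
      fderiv ℂ G (x.1, R x, x.2) (u.1, fderiv ℂ R x u, u.2) := by
  have h1 : HasFDerivAt (fun x : E × P => (x.1, R x, x.2)) _ x :=
    hasFDerivAt_fst.prodMk (hR.hasFDerivAt.prodMk hasFDerivAt_snd)
  have h2 := (HasFDerivAt.comp (g := G) x hG.hasFDerivAt h1).fderiv
  exact congrArg (fun T => T u) h2

/-- If `G` vanishes on the graph of `R` and, at generic parameters, is stationary in some nonzero
parameter direction along the graph, then its transversal derivative vanishes on the graph. -/
theorem transversal_deriv_eq_zero {R : E × P → ℂ} {G : E × ℂ × P → ℂ} {θ : P → ℂ}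
    (hR : AnalyticAt ℂ R 0) (hR0 : R 0 = 0) (hnd : SegreNondeg R) (hG : AnalyticAt ℂ G 0)
    (hG0 : ∀ᶠ x in 𝓝 (0 : E × P), G (x.1, R x, x.2) = 0)
    (hθ : AnalyticAt ℂ θ 0) (hθ0 : ¬ ∀ᶠ p in 𝓝 0, θ p = 0)
    (hker : ∀ᶠ p in 𝓝 0, θ p ≠ 0 → ∃ v ≠ 0,
      ∀ᶠ z in 𝓝 (0 : E), fderiv ℂ G (z, R (z, p), p) (0, 0, v) = 0) :
    ∀ᶠ x in 𝓝 (0 : E × P), fderiv ℂ G (x.1, R x, x.2) (0, 1, 0) = 0 := by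
  obtain ⟨D, hD, hD0, hDv⟩ := hnd
  have hgr : AnalyticAt ℂ (fun x : E × P => (x.1, R x, x.2)) 0 :=
    analyticAt_graph hR analyticAt_id
  have hgr0 : ((0 : E × P).1, R 0, (0 : E × P).2) = (0 : E × ℂ × P) := by rw [hR0]; rfl
  have hGw : AnalyticAt ℂ (fun x : E × P => fderiv ℂ G (x.1, R x, x.2) (0, 1, 0)) 0 :=
    AnalyticAt.comp_of_eq (g := dirD (0, 1, 0) G) (analyticAt_dirD hG _) hgr hgr0
  have hθs : AnalyticAt ℂ (fun x : E × P => θ x.2) 0 :=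
    AnalyticAt.comp (g := θ) (f := fun x : E × P => x.2) (x := 0) hθ analyticAt_snd
  have hDs : AnalyticAt ℂ (fun x : E × P => D x.2) 0 :=
    AnalyticAt.comp (g := D) (f := fun x : E × P => x.2) (x := 0) hD analyticAt_snd
  have hgood : ∀ᶠ x in 𝓝 ((0 : E), (0 : P)),
      fderiv ℂ (fun x : E × P => G (x.1, R x, x.2)) x = 0 ∧ AnalyticAt ℂ R x ∧
        AnalyticAt ℂ G (x.1, R x, x.2) := by
    have h1 : ∀ᶠ x in 𝓝 (0 : E × P), fderiv ℂ (fun x : E × P => G (x.1, R x, x.2)) x = 0 := by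
      filter_upwards [hG0.eventually_nhds] with x hx
      have : (fun x : E × P => G (x.1, R x, x.2)) =ᶠ[𝓝 x] fun _ => 0 := hx
      rw [this.fderiv_eq]; simp
    have h2 : ∀ᶠ x in 𝓝 (0 : E × P), AnalyticAt ℂ G (x.1, R x, x.2) := by
      refine hgr.continuousAt.eventually ?_
      simp only [hgr0]
      exact hG.eventually_analyticAt
    exact h1.and (hR.eventually_analyticAt.and h2)
  have hprod : ∀ᶠ x in 𝓝 (0 : E × P),
      θ x.2 * (D x.2 * fderiv ℂ G (x.1, R x, x.2) (0, 1, 0)) = 0 := by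
    refine eventually_zero_of_slices
      (h := fun x : E × P => θ x.2 * (D x.2 * fderiv ℂ G (x.1, R x, x.2) (0, 1, 0)))
      (hθs.mul (hDs.mul hGw)) ?_
    filter_upwards [hker, hDv, eventually_curry_swap hgood] with p hkp hDp hp
    by_cases hθp : θ p = 0
    · simp [hθp]
    by_cases hDp0 : D p = 0
    · simp [hDp0]
    obtain ⟨v, hv, hvz⟩ := hkp hθp
    obtain ⟨-, hRa, hGa⟩ := hp.self_of_nhds
    have hsl : AnalyticAt ℂ (fun z : E => (z, p)) 0 := analyticAt_id.prod analyticAt_const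
    have hmul : ∀ᶠ z in 𝓝 (0 : E),
        fderiv ℂ R (z, p) (0, v) * fderiv ℂ G (z, R (z, p), p) (0, 1, 0) = 0 := by
      filter_upwards [hvz, hp] with z hz hz'
      have h := hasFDerivAt_on_graph hz'.2.1.differentiableAt hz'.2.2.differentiableAt
        ((0, v) : E × P)
      rw [hz'.1] at h
      have e : ((0, fderiv ℂ R (z, p) (0, v), v) : E × ℂ × P) =
          fderiv ℂ R (z, p) (0, v) • ((0, 1, 0) : E × ℂ × P) + (0, 0, v) := by simp
      simp only [zero_apply] at h
      rw [e, map_add, hz, map_smul, add_zero, smul_eq_mul] at h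
      exact h.symm
    have hfa : AnalyticAt ℂ (fun z : E => fderiv ℂ R (z, p) (0, v)) 0 :=
      AnalyticAt.comp (g := dirD (0, v) R) (analyticAt_dirD hRa _) hsl
    have hga : AnalyticAt ℂ (fun z : E => fderiv ℂ G (z, R (z, p), p) (0, 1, 0)) 0 :=
      AnalyticAt.comp (g := dirD (0, 1, 0) G) (f := fun z : E => (z, R (z, p), p))
        (analyticAt_dirD hGa _)
        (analyticAt_id.prod ((AnalyticAt.comp (g := R) (f := fun z : E => (z, p)) hRa hsl).prod
          analyticAt_const))
    filter_upwards [(eventually_zero_or_of_mul hfa hga hmul).resolve_left (hDp hDp0 v hv)]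
      with z hz
    rw [hz]; ring
  have hlift : ∀ {φ : P → ℂ}, (∀ᶠ x in 𝓝 (0 : E × P), φ x.2 = 0) → ∀ᶠ p in 𝓝 0, φ p = 0 :=
    fun h => ((eventually_curry_swap (a := (0 : E)) (b := (0 : P)) h).mono
      fun p hp => hp.self_of_nhds)
  rcases eventually_zero_or_of_mul hθs (hDs.mul hGw) hprod with h | h
  · exact absurd (hlift h) hθ0
  · exact (eventually_zero_or_of_mul hDs hGw h).resolve_left fun h => hD0 (hlift h)

/-- If `Φ(z,R(z,p),N(p))` vanishes identically, where `N` is everywhere degenerate and `R` is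
nondegenerate, then so does `Φ(z,w,N(p))`. -/
theorem eventually_eq_zero_of_degenerate [CompleteSpace P'] {R : E × P → ℂ} {N : P → P'}
    {Φ : E × ℂ × P' → ℂ}
    (hR : AnalyticAt ℂ R 0) (hR0 : R 0 = 0) (hnd : SegreNondeg R)
    (hN : AnalyticAt ℂ N 0) (hN0 : N 0 = 0)
    (hker : ∀ᶠ p in 𝓝 0, ∃ v ≠ 0, fderiv ℂ N p v = 0)
    (hΦ : AnalyticAt ℂ Φ 0) (hΦ0 : ∀ᶠ x in 𝓝 (0 : E × P), Φ (x.1, R x, N x.2) = 0) :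
    ∀ᶠ y in 𝓝 (0 : E × ℂ × P), Φ (y.1, y.2.1, N y.2.2) = 0 := by
  have hgr : AnalyticAt ℂ (fun x : E × P => (x.1, R x, N x.2)) 0 := analyticAt_graph hR hN
  have hgr0 : ((0 : E × P).1, R 0, N (0 : E × P).2) = (0 : E × ℂ × P') := by
    rw [hR0]; simp [hN0]
  have hι : AnalyticAt ℂ (fun y : E × ℂ × P => (y.1, y.2.1, N y.2.2)) 0 :=
    analyticAt_fst.prod ((analyticAt_fst.comp analyticAt_snd).prod
      (AnalyticAt.comp (g := N) (f := fun y : E × ℂ × P => y.2.2) (x := 0) hN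
        (analyticAt_snd.comp analyticAt_snd)))
  have hι0 : ((0 : E × ℂ × P).1, (0 : E × ℂ × P).2.1, N (0 : E × ℂ × P).2.2) =
      (0 : E × ℂ × P') := by simp [hN0]
  have hgrP : AnalyticAt ℂ (fun x : E × P => (x.1, R x, x.2)) 0 :=
    analyticAt_graph hR analyticAt_id
  have hgrP0 : ((0 : E × P).1, R 0, (0 : E × P).2) = (0 : E × ℂ × P) := by rw [hR0]; rfl
  have hstep : ∀ Ψ : E × ℂ × P' → ℂ, AnalyticAt ℂ Ψ 0 →
      (∀ᶠ x in 𝓝 (0 : E × P), Ψ (x.1, R x, N x.2) = 0) →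
      ∀ᶠ x in 𝓝 (0 : E × P), dirD (0, 1, 0) Ψ (x.1, R x, N x.2) = 0 := by
    intro Ψ hΨ hΨ0
    have hchain : ∀ᶠ y in 𝓝 (0 : E × ℂ × P), ∀ u : E × ℂ × P,
        fderiv ℂ (fun y : E × ℂ × P => Ψ (y.1, y.2.1, N y.2.2)) y u =
          fderiv ℂ Ψ (y.1, y.2.1, N y.2.2) (u.1, u.2.1, fderiv ℂ N y.2.2 u.2.2) := by
      have h1 : ∀ᶠ y in 𝓝 (0 : E × ℂ × P), AnalyticAt ℂ Ψ (y.1, y.2.1, N y.2.2) := by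
        refine hι.continuousAt.eventually ?_
        simp only [hι0]
        exact hΨ.eventually_analyticAt
      have h2 : ∀ᶠ y in 𝓝 (0 : E × ℂ × P), AnalyticAt ℂ N y.2.2 :=
        ((continuous_snd.comp continuous_snd).tendsto (0 : E × ℂ × P)).eventually
          hN.eventually_analyticAt
      filter_upwards [h1, h2] with y hy1 hy2 u
      have h3 : HasFDerivAt (fun y : E × ℂ × P => (y.1, y.2.1, N y.2.2)) _ y :=
        hasFDerivAt_fst.prodMk ((hasFDerivAt_fst.comp y hasFDerivAt_snd).prodMk
          (HasFDerivAt.comp (g := N) (f := fun y : E × ℂ × P => y.2.2) y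
            hy2.differentiableAt.hasFDerivAt (hasFDerivAt_snd.comp y hasFDerivAt_snd)))
      have h4 := (HasFDerivAt.comp (g := Ψ) y hy1.differentiableAt.hasFDerivAt h3).fderiv
      exact congrArg (fun T => T u) h4
    have hchain' : ∀ᶠ x in 𝓝 (0 : E × P), ∀ u : E × ℂ × P,
        fderiv ℂ (fun y : E × ℂ × P => Ψ (y.1, y.2.1, N y.2.2)) (x.1, R x, x.2) u =
          fderiv ℂ Ψ (x.1, R x, N x.2) (u.1, u.2.1, fderiv ℂ N x.2 u.2.2) := by
      have := hgrP.continuousAt.tendsto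
      simp only [hgrP0] at this
      exact this.eventually hchain
    have hmain := transversal_deriv_eq_zero (θ := fun _ => 1)
      (G := fun y : E × ℂ × P => Ψ (y.1, y.2.1, N y.2.2)) hR hR0 hnd
      (AnalyticAt.comp_of_eq (g := Ψ) hΨ hι hι0) hΨ0 analyticAt_const
      (by simp [NeBot.ne]) (by
        filter_upwards [hker, eventually_curry_swap (a := (0 : E)) (b := (0 : P)) hchain']
          with p ⟨v, hv, hNv⟩ hp _
        refine ⟨v, hv, ?_⟩
        filter_upwards [hp] with z hz
        rw [hz, hNv]
        exact map_zero _)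
    filter_upwards [hmain, hchain'] with x hx hx'
    rw [hx'] at hx
    simpa [dirD] using hx
  have hiter : ∀ k, ∀ᶠ x in 𝓝 (0 : E × P),
      dirDs (List.replicate k (0, 1, 0)) Φ (x.1, R x, N x.2) = 0 := by
    intro k
    induction k with
    | zero => exact hΦ0
    | succ k ih =>
      refine hstep _ ?_ ih
      exact analyticOnNhd_dirDs (U := {0}) (fun x hx => hx ▸ hΦ) _ 0 rfl
  obtain ⟨r, hr, hball⟩ := Metric.eventually_nhds_iff_ball.1 hΦ.eventually_analyticAt
  have hmem : ∀ᶠ x in 𝓝 (0 : E × P), (x.1, R x, N x.2) ∈ Metric.ball (0 : E × ℂ × P') r ∧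
      AnalyticAt ℂ R x ∧ AnalyticAt ℂ N x.2 := by
    refine (hgr.continuousAt.eventually ?_).and (hR.eventually_analyticAt.and
      ((continuous_snd.tendsto (0 : E × P)).eventually hN.eventually_analyticAt))
    simp only [hgr0]
    exact Metric.ball_mem_nhds _ hr
  obtain ⟨ρ, hρ, hballρ⟩ := Metric.eventually_nhds_iff_ball.1 hmem
  have hall : ∀ x ∈ Metric.ball (0 : E × P) ρ, ∀ k,
      dirDs (List.replicate k (0, 1, 0)) Φ (x.1, R x, N x.2) = 0 := by
    intro x hx k
    refine eqOn_zero_of_eventually (f := fun x : E × P =>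
      dirDs (List.replicate k (0, 1, 0)) Φ (x.1, R x, N x.2)) (fun x hx => ?_)
      (convex_ball 0 ρ) (Metric.mem_ball_self hρ) (hiter k) x hx
    obtain ⟨h1, h2, h3⟩ := hballρ x hx
    exact AnalyticAt.comp (g := dirDs (List.replicate k (0, 1, 0)) Φ)
      (analyticOnNhd_dirDs hball _ _ h1) (analyticAt_graph h2 h3)
  have hproj : ∀ᶠ y in 𝓝 (0 : E × ℂ × P), (y.1, y.2.2) ∈ Metric.ball (0 : E × P) ρ :=
    ((continuous_fst.prodMk (continuous_snd.comp continuous_snd)).tendsto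
      (0 : E × ℂ × P)).eventually (Metric.ball_mem_nhds _ hρ)
  have hιm : ∀ᶠ y in 𝓝 (0 : E × ℂ × P),
      (y.1, y.2.1, N y.2.2) ∈ Metric.ball (0 : E × ℂ × P') r := by
    refine hι.continuousAt.eventually ?_
    simp only [hι0]
    exact Metric.ball_mem_nhds _ hr
  filter_upwards [hproj, hιm] with y hy hy'
  have e : (y.1, y.2.1, N y.2.2) = (y.1, R (y.1, y.2.2), N y.2.2) +
      (y.2.1 - R (y.1, y.2.2)) • ((0, 1, 0) : E × ℂ × P') := by simp
  rw [e] at hy' ⊢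
  exact eq_zero_on_line Metric.isOpen_ball (convex_ball _ _) hball (hballρ _ hy).1
    (hall _ hy) hy'

end Segre

section Conjugate

variable {E P : Type*} [NormedAddCommGroup E] [NormedSpace ℂ E] [StarAddMonoid E]
  [StarModule ℂ E] [NormedStarGroup E]
  [NormedAddCommGroup P] [NormedSpace ℂ P] [StarAddMonoid P] [StarModule ℂ P] [NormedStarGroup P]

instance : NormedStarGroup (E × P) where
  norm_star_le x := by simp [Prod.norm_def, Prod.star_def]

/-- The conjugate of a scalar multilinear map. -/
noncomputable def conjMultilinear {m : ℕ} (p : E [×m]→L[ℂ] ℂ) : E [×m]→L[ℂ] ℂ where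
  toFun v := star (p fun i => star (v i))
  map_update_add' v i x y := by
    have e : ∀ x, (fun j => star (Function.update v i x j)) =
        Function.update (fun j => star (v j)) i (star x) := fun x => by
      ext j; by_cases h : j = i
      · subst h; simp
      · simp [h]
    have := Subsingleton.elim ‹DecidableEq (Fin m)› (instDecidableEqFin m)
    subst this
    simp only [e, star_add, ContinuousMultilinearMap.map_update_add]
  map_update_smul' v i c x := by
    have e : ∀ x, (fun j => star (Function.update v i x j)) =
        Function.update (fun j => star (v j)) i (star x) := fun x => by
      ext j; by_cases h : j = i
      · subst h; simp
      · simp [h]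
    have := Subsingleton.elim ‹DecidableEq (Fin m)› (instDecidableEqFin m)
    subst this
    simp only [e, star_smul, ContinuousMultilinearMap.map_update_smul, star_star]
  cont := continuous_star.comp (p.cont.comp
    (continuous_pi fun i => continuous_star.comp (continuous_apply i)))

theorem norm_conjMultilinear_le {m : ℕ} (p : E [×m]→L[ℂ] ℂ) : ‖conjMultilinear p‖ ≤ ‖p‖ :=
  ContinuousMultilinearMap.opNorm_le_bound (norm_nonneg _) fun v => by
    refine (norm_star _).le.trans ((p.le_opNorm _).trans_eq ?_)
    simp only [norm_star]

theorem analyticAt_conj {f : E → ℂ} {x : E} (hf : AnalyticAt ℂ f (star x)) :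
    AnalyticAt ℂ (fun y => star (f (star y))) x := by
  obtain ⟨p, r, hp⟩ := hf
  refine ⟨fun m => conjMultilinear (p m), r, ⟨?_, hp.r_pos, fun {y} hy => ?_⟩⟩
  · exact hp.r_le.trans (FormalMultilinearSeries.radius_le_of_le
      fun m => norm_conjMultilinear_le (p m))
  · have hy' : star y ∈ Metric.eball (0 : E) r := by
      simpa [Metric.mem_eball, edist_zero_right, enorm_eq_nnnorm] using hy
    have h := (hp.hasSum hy').star
    rw [← star_add] at h
    exact h

theorem fderiv_conj {f : E → ℂ} {x : E} (hf : DifferentiableAt ℂ f (star x)) (u : E) :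
    fderiv ℂ (fun y => star (f (star y))) x u = star (fderiv ℂ f (star x) (star u)) := by
  have h := hf.hasFDerivAt.star_star
  rw [star_star] at h
  exact congrArg (fun T => T u) h.fderiv

theorem SegreNondeg.conj {R : E × P → ℂ} (hR : AnalyticAt ℂ R 0) (h : SegreNondeg R) :
    SegreNondeg fun x : E × P => star (R (star x)) := by
  obtain ⟨D, hD, hD0, hDv⟩ := h
  have hs : Tendsto (star : P → P) (𝓝 0) (𝓝 0) := by
    simpa using (continuous_star (R := P)).tendsto 0
  have hsE : Tendsto (star : E → E) (𝓝 0) (𝓝 0) := by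
    simpa using (continuous_star (R := E)).tendsto 0
  refine ⟨fun p => star (D (star p)), analyticAt_conj (by simpa using hD), fun h => hD0 ?_, ?_⟩
  · filter_upwards [hs.eventually h] with p hp
    simpa using hp
  · filter_upwards [hs.eventually hDv,
      hs.eventually (eventually_curry_swap (a := (0 : E)) (b := (0 : P))
        hR.eventually_analyticAt)] with p hp hRp hDp v hv hz
    refine hp (by simpa using hDp) (star v) (by simpa using hv) ?_
    filter_upwards [hsE.eventually hz, hRp] with z hz' hRz
    have e : star ((star z, p) : E × P) = (z, star p) := by simp [Prod.star_def]
    rw [fderiv_conj (by rw [e]; exact hRz.differentiableAt), e] at hz'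
    simpa [Prod.star_def] using hz'

end Conjugate

section MultiIndex

/-- The list of coordinate directions with multiplicities given by `α`. -/
def dirList (α : Fin n → ℕ) : List (Fin n) := (List.ofFn fun i => List.replicate (α i) i).flatten

/-- The iterated partial derivative along a list of coordinate directions. -/
noncomputable def pdList (l : List (Fin n)) (F : (Fin n → ℂ) → ℂ) : (Fin n → ℂ) → ℂ :=
  dirDs (l.map fun i => Pi.single i 1) F

theorem mpd_eq_pdList (α : Fin n → ℕ) (F : (Fin n → ℂ) → ℂ) : mpd α F = pdList (dirList α) F := by
  have hrep : ∀ (i : Fin n) (k : ℕ) (G : (Fin n → ℂ) → ℂ),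
      (pd i)^[k] G = pdList (List.replicate k i) G := by
    intro i k G
    induction k with
    | zero => rfl
    | succ k ih => rw [Function.iterate_succ_apply', ih]; rfl
  have hlist : ∀ L : List (Fin n),
      (L.map fun i => (pd i)^[α i]).foldr (· ∘ ·) id F =
        pdList (L.map fun i => List.replicate (α i) i).flatten F := by
    intro L
    induction L with
    | nil => rfl
    | cons i L ih =>
      simp only [List.map_cons, List.foldr_cons, Function.comp_apply, List.flatten_cons]
      rw [ih, hrep]
      simp only [pdList, List.map_append, dirDs_append]
  simpa only [mpd, dirList, List.ofFn_eq_map] using hlist (List.finRange n)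

theorem perm_dirList_count (l : List (Fin n)) : l.Perm (dirList fun i => l.count i) := by
  rw [List.perm_iff_count]
  intro j
  rw [dirList, List.count_flatten, List.map_ofFn, List.sum_ofFn]
  simp [List.count_replicate]

theorem pdList_zero_of_mpd {U : Set (Fin n → ℂ)} (hU : IsOpen U) {F : (Fin n → ℂ) → ℂ}
    (hF : AnalyticOnNhd ℂ F U) {a : Fin n → ℂ} (ha : a ∈ U) (h : ∀ α, mpd α F a = 0)
    (l : List (Fin n)) : pdList l F a = 0 := by
  rw [← h fun i => l.count i, mpd_eq_pdList]
  exact dirDs_perm hU hF ((perm_dirList_count l).map _) ha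

theorem dirD_eq_sum (w : Fin n → ℂ) (F : (Fin n → ℂ) → ℂ) (a : Fin n → ℂ) :
    dirD w F a = ∑ i, w i * dirD (Pi.single i 1) F a := by
  conv_lhs => rw [dirD, pi_eq_sum_univ' w]
  simp only [map_sum, map_smul, smul_eq_mul, dirD]

/-- An analytic function all of whose iterated partial derivatives vanish at a point is zero. -/
theorem eq_zero_of_mpd {U : Set (Fin n → ℂ)} (hU : IsOpen U) (hc : Convex ℝ U)
    {F : (Fin n → ℂ) → ℂ} (hF : AnalyticOnNhd ℂ F U) {a : Fin n → ℂ} (ha : a ∈ U)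
    (h : ∀ α, mpd α F a = 0) : ∀ y ∈ U, F y = 0 := by
  intro y hy
  have key : ∀ k (l : List (Fin n)), dirDs (List.replicate k (y - a)) (pdList l F) a = 0 := by
    intro k
    induction k with
    | zero => exact pdList_zero_of_mpd hU hF ha h
    | succ k ih =>
      intro l
      rw [List.replicate_succ, dirDs_cons, dirD_eq_sum]
      refine Finset.sum_eq_zero fun i _ => mul_eq_zero_of_right _ ?_
      rw [← ih (i :: l), ← dirDs_cons]
      simp only [pdList, ← dirDs_append, List.map_cons]
      exact dirDs_perm hU hF List.perm_middle.symm ha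
  have e : y = a + (1 : ℂ) • (y - a) := by simp
  rw [e]
  exact eq_zero_on_line hU hc hF ha (fun k => key k []) (by rwa [← e])

/-- A family of vectors all of whose maximal minors vanish has a common annihilating vector. -/
theorem exists_common_kernel {ι : Type*} {m : ℕ} (c : ι → Fin m → ℂ)
    (h : ∀ A : Fin m → ι, (Matrix.of fun j k => c (A j) k).det = 0) :
    ∃ v : Fin m → ℂ, v ≠ 0 ∧ ∀ i, ∑ k, c i k * v k = 0 := by
  by_cases hs : Submodule.span ℂ (Set.range c) = ⊤
  · exfalso
    let b := Module.Basis.ofSpan hs.ge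
    have hb : ∀ i, ∃ j, c j = b i := fun i =>
      Module.Basis.ofSpan_subset hs.ge (Set.mem_range_self i)
    let e := b.indexEquiv (Pi.basisFun ℂ (Fin m))
    choose A hA using fun k : Fin m => hb (e.symm k)
    have hli : LinearIndependent ℂ (Matrix.of fun j k => c (A j) k).row := by
      have : (Matrix.of fun j k => c (A j) k).row = b ∘ e.symm := by
        ext j k; simp [Matrix.row, hA]
      rw [this]
      exact b.linearIndependent.comp _ e.symm.injective
    rw [Matrix.linearIndependent_rows_iff_isUnit, Matrix.isUnit_iff_isUnit_det, h A] at hli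
    exact not_isUnit_zero hli
  · obtain ⟨φ, hφ, hle⟩ := Submodule.exists_le_ker_of_lt_top _ (lt_top_iff_ne_top.2 hs)
    have hφs : ∀ x : Fin m → ℂ, φ x = ∑ k, x k * φ (Pi.single k 1) := fun x => by
      conv_lhs => rw [pi_eq_sum_univ' x]
      simp only [map_sum, map_smul, smul_eq_mul]
    refine ⟨fun k => φ (Pi.single k 1), fun h0 => hφ ?_, fun i => ?_⟩
    · ext k
      simpa using congrFun h0 k
    · rw [← hφs]
      exact hle (Submodule.subset_span ⟨i, rfl⟩)

end MultiIndex

section Nondegeneracy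

instance : NormedStarGroup (Fin n → ℂ) where
  norm_star_le x := (pi_norm_le_iff_of_nonneg (norm_nonneg x)).2 fun i => by
    simpa using norm_le_pi_norm x i

/-- The vector of `ℂⁿ × ℂ` with given coordinates. -/
def vecCT (v : Fin (n + 1) → ℂ) : (Fin n → ℂ) × ℂ := (fun i => v i.castSucc, v (Fin.last n))

theorem vecCT_eq_sum (v : Fin (n + 1) → ℂ) : vecCT v = ∑ k, v k • dirCT n k := by
  have h1 : ∀ i : Fin n, dirCT n i.castSucc = (Pi.single i 1, 0) := fun i => by
    simp [dirCT]
  have h2 : dirCT n (Fin.last n) = (0, 1) := by simp [dirCT]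
  rw [Fin.sum_univ_castSucc, h2]
  simp only [h1, vecCT]
  ext j
  · simp [Prod.fst_sum, Finset.sum_apply, Pi.single_apply]
  · simp [Prod.snd_sum]

theorem vecCT_ne_zero {v : Fin (n + 1) → ℂ} (hv : v ≠ 0) : vecCT v ≠ 0 := fun h => hv <| by
  ext k
  refine Fin.lastCases ?_ (fun i => ?_) k
  · exact congrArg Prod.snd h
  · exact congrFun (congrArg Prod.fst h) i

theorem exists_vecCT (u : (Fin n → ℂ) × ℂ) : ∃ v, vecCT v = u :=
  ⟨Fin.snoc (α := fun _ => ℂ) u.1 u.2, by simp [vecCT]⟩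

theorem analyticAt_det_s1 {E ι : Type*} [NormedAddCommGroup E] [NormedSpace ℂ E] [Fintype ι]
    [DecidableEq ι] {M : E → Matrix ι ι ℂ} {x : E}
    (h : ∀ i j, AnalyticAt ℂ (fun y => M y i j) x) : AnalyticAt ℂ (fun y => (M y).det) x := by
  simp only [Matrix.det_apply']
  exact Finset.analyticAt_fun_sum _ fun σ _ => analyticAt_const.mul
    (Finset.analyticAt_fun_prod _ fun i _ => h _ _)

/-- The uncurried defining function. -/
def unc (Q : (Fin n → ℂ) → (Fin n → ℂ) → ℂ → ℂ) : (Fin n → ℂ) × ((Fin n → ℂ) × ℂ) → ℂ :=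
  fun x => Q x.1 x.2.1 x.2.2

/-- The matrix whose minors express holomorphic nondegeneracy. -/
noncomputable def nondegMatrix (Q : (Fin n → ℂ) → (Fin n → ℂ) → ℂ → ℂ)
    (A : Fin (n + 1) → Fin n → ℕ) (p : (Fin n → ℂ) × ℂ) : Matrix (Fin (n + 1)) (Fin (n + 1)) ℂ :=
  Matrix.of fun j k => fderiv ℂ (fun q : (Fin n → ℂ) × ℂ => mpd (A j) (fun z => Q z q.1 q.2) 0) p
    (dirCT n k)

variable {Q : (Fin n → ℂ) → (Fin n → ℂ) → ℂ → ℂ}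
  {U : Set ((Fin n → ℂ) × ((Fin n → ℂ) × ℂ))}

theorem fderiv_mpd (hU : IsOpen U) (hQ : AnalyticOnNhd ℂ (unc Q) U) {p : (Fin n → ℂ) × ℂ}
    (hp : (0, p) ∈ U) (α : Fin n → ℕ) (v : (Fin n → ℂ) × ℂ) :
    fderiv ℂ (fun q : (Fin n → ℂ) × ℂ => mpd α (fun z => Q z q.1 q.2) 0) p v =
      mpd α (fun z => fderiv ℂ (unc Q) (z, p) (0, v)) 0 := by
  simp only [mpd_eq_pdList]
  exact fderiv_dirDs_comm hU hQ _ hp v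

theorem analyticAt_det_nondegMatrix (hU : IsOpen U) (hQ : AnalyticOnNhd ℂ (unc Q) U)
    {p : (Fin n → ℂ) × ℂ} (hp : (0, p) ∈ U) (A : Fin (n + 1) → Fin n → ℕ) :
    AnalyticAt ℂ (fun p => (nondegMatrix Q A p).det) p := by
  refine analyticAt_det_s1 fun j k => ?_
  have hev : ∀ᶠ q in 𝓝 p, (0, q) ∈ U :=
    (Continuous.prodMk_right (0 : Fin n → ℂ)).continuousAt.eventually (hU.mem_nhds hp)
  set l : List (Fin n → ℂ) := (dirList (A j)).map fun i => Pi.single i 1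
  have ha : AnalyticAt ℂ (fun q => dirDs ((0, dirCT n k) :: l.map fun u => (u, 0)) (unc Q) (0, q))
      p :=
    AnalyticAt.comp (f := fun q : (Fin n → ℂ) × ℂ => ((0 : Fin n → ℂ), q))
      (analyticOnNhd_dirDs hQ _ _ hp) (analyticAt_const.prod analyticAt_id)
  refine ha.congr ?_
  filter_upwards [hev] with q hq
  simp only [nondegMatrix, Matrix.of_apply, mpd_eq_pdList]
  exact (fderiv_dirDs_slice hU hQ l hq _).symm

theorem nondegMatrix_mulVec (hU : IsOpen U) (hQ : AnalyticOnNhd ℂ (unc Q) U)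
    {p : (Fin n → ℂ) × ℂ} (hp : (0, p) ∈ U) (α : Fin n → ℕ) (v : Fin (n + 1) → ℂ) :
    ∑ k, fderiv ℂ (fun q : (Fin n → ℂ) × ℂ => mpd α (fun z => Q z q.1 q.2) 0) p (dirCT n k) * v k =
      mpd α (fun z => fderiv ℂ (unc Q) (z, p) (0, vecCT v)) 0 := by
  rw [← fderiv_mpd hU hQ hp, vecCT_eq_sum, map_sum]
  simp [mul_comm]

theorem HolNondeg.segreNondeg (hQ : AnalyticAt ℂ (unc Q) 0) (h : HolNondeg Q) :
    SegreNondeg (unc Q) := by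
  obtain ⟨K, A, -, hA⟩ := h
  obtain ⟨r, hr, hball⟩ := Metric.eventually_nhds_iff_ball.1 hQ.eventually_analyticAt
  have h0 : ((0 : Fin n → ℂ), (0 : (Fin n → ℂ) × ℂ)) ∈ Metric.ball 0 r := Metric.mem_ball_self hr
  refine ⟨fun p => (nondegMatrix Q A p).det,
    analyticAt_det_nondegMatrix Metric.isOpen_ball hball h0 A, hA, ?_⟩
  have hev : ∀ᶠ q in 𝓝 (0 : (Fin n → ℂ) × ℂ), ((0 : Fin n → ℂ), q) ∈ Metric.ball 0 r :=
    (Continuous.prodMk_right (0 : Fin n → ℂ)).continuousAt.eventually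
      (Metric.isOpen_ball.mem_nhds h0)
  filter_upwards [hev] with p hp hdet v hv hz
  obtain ⟨c, rfl⟩ := exists_vecCT v
  refine hdet (Matrix.exists_mulVec_eq_zero_iff.1 ⟨c, fun hc => hv (by simp [hc, vecCT]; rfl), ?_⟩)
  ext j
  refine (nondegMatrix_mulVec Metric.isOpen_ball hball hp (A j) c).trans ?_
  obtain ⟨s, hs, hso, h0s⟩ := eventually_nhds_iff.1 hz
  rw [mpd_eq_pdList, pdList, dirDs_congr (g := 0) hso hs _ h0s, dirDs_zero]
  rfl

theorem exists_degenerate_of_not_holNondeg (hQ : AnalyticAt ℂ (unc Q) 0) (h : ¬ HolNondeg Q) :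
    ∃ r > 0, ∀ p ∈ Metric.ball (0 : (Fin n → ℂ) × ℂ) r, ∃ v ≠ 0,
      ∀ z ∈ Metric.ball (0 : Fin n → ℂ) r, fderiv ℂ (unc Q) (z, p) (0, v) = 0 := by
  obtain ⟨r, hr, hball⟩ := Metric.eventually_nhds_iff_ball.1 hQ.eventually_analyticAt
  have hmem : ∀ z ∈ Metric.ball (0 : Fin n → ℂ) r, ∀ p ∈ Metric.ball (0 : (Fin n → ℂ) × ℂ) r,
      (z, p) ∈ Metric.ball (0 : (Fin n → ℂ) × ((Fin n → ℂ) × ℂ)) r := fun z hz p hp => by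
    rw [show (0 : (Fin n → ℂ) × ((Fin n → ℂ) × ℂ)) = (0, 0) from rfl, ← ball_prod_same]
    exact ⟨hz, hp⟩
  have h0 : (0 : Fin n → ℂ) ∈ Metric.ball 0 r := Metric.mem_ball_self hr
  refine ⟨r, hr, fun p hp => ?_⟩
  have hdet : ∀ A : Fin (n + 1) → Fin n → ℕ, (nondegMatrix Q A p).det = 0 := by
    intro A
    refine eqOn_zero_of_eventually (f := fun p => (nondegMatrix Q A p).det)
      (fun q hq => analyticAt_det_nondegMatrix Metric.isOpen_ball hball (hmem 0 h0 q hq) A)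
      (convex_ball 0 r) (Metric.mem_ball_self hr) ?_ p hp
    by_contra hcon
    exact h ⟨∑ j, ∑ i, A j i, A, fun j => Finset.single_le_sum
      (f := fun j => ∑ i, A j i) (fun _ _ => Nat.zero_le _) (Finset.mem_univ j), hcon⟩
  obtain ⟨v, hv, hv0⟩ := exists_common_kernel (fun (α : Fin n → ℕ) k =>
    fderiv ℂ (fun q : (Fin n → ℂ) × ℂ => mpd α (fun z => Q z q.1 q.2) 0) p (dirCT n k)) hdet
  refine ⟨vecCT v, vecCT_ne_zero hv, ?_⟩
  refine eq_zero_of_mpd Metric.isOpen_ball (convex_ball 0 r) (fun z hz => ?_) h0 fun α => ?_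
  · exact AnalyticAt.comp (g := dirD (0, vecCT v) (unc Q)) (f := fun z => (z, p))
      (analyticAt_dirD (hball _ (hmem z hz p hp)) _) (analyticAt_id.prod analyticAt_const)
  · rw [← nondegMatrix_mulVec Metric.isOpen_ball hball (hmem 0 h0 p hp) α v]
    exact hv0 α

end Nondegeneracy

section Jacobian

/-- The map of `ℂⁿ × ℂ` with components `f` and `g`. -/
def mapCT (f : (Fin n → ℂ) → ℂ → Fin n → ℂ) (g : (Fin n → ℂ) → ℂ → ℂ) :
    (Fin n → ℂ) × ℂ → (Fin n → ℂ) × ℂ :=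
  fun q => (f q.1 q.2, g q.1 q.2)

variable {f : (Fin n → ℂ) → ℂ → Fin n → ℂ} {g : (Fin n → ℂ) → ℂ → ℂ} {p : (Fin n → ℂ) × ℂ}

theorem vecCT_jacFull_mulVec (h : DifferentiableAt ℂ (mapCT f g) p) (c : Fin (n + 1) → ℂ) :
    vecCT ((jacFull f g p).mulVec c) = fderiv ℂ (mapCT f g) p (vecCT c) := by
  have hl : ∀ v, fderiv ℂ (fun q : (Fin n → ℂ) × ℂ => g q.1 q.2) p v =
      (fderiv ℂ (mapCT f g) p v).2 := fun v =>
    congrArg (fun T => T v) (hasFDerivAt_snd.comp p h.hasFDerivAt).fderiv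
  have hi : ∀ i v, fderiv ℂ (fun q : (Fin n → ℂ) × ℂ => f q.1 q.2 i) p v =
      (fderiv ℂ (mapCT f g) p v).1 i := fun i v =>
    congrArg (fun T => T v) (((ContinuousLinearMap.proj (R := ℂ) (φ := fun _ : Fin n => ℂ)
      i).hasFDerivAt.comp p (hasFDerivAt_fst.comp p h.hasFDerivAt)).fderiv)
  rw [vecCT_eq_sum c, map_sum]
  ext i
  · simp [vecCT, Matrix.mulVec, dotProduct, jacFull, hi, Prod.fst_sum, mul_comm]
  · simp [vecCT, Matrix.mulVec, dotProduct, jacFull, hl, Prod.snd_sum, mul_comm]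

theorem exists_fderiv_eq_zero_of_det (h : DifferentiableAt ℂ (mapCT f g) p)
    (hd : (jacFull f g p).det = 0) : ∃ v ≠ 0, fderiv ℂ (mapCT f g) p v = 0 := by
  obtain ⟨c, hc, hc0⟩ := Matrix.exists_mulVec_eq_zero_iff.2 hd
  refine ⟨vecCT c, vecCT_ne_zero hc, ?_⟩
  rw [← vecCT_jacFull_mulVec h, hc0]
  rfl

theorem fderiv_surjective_of_det (h : DifferentiableAt ℂ (mapCT f g) p)
    (hd : (jacFull f g p).det ≠ 0) : Function.Surjective (fderiv ℂ (mapCT f g) p) := fun b => by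
  obtain ⟨c, rfl⟩ := exists_vecCT b
  refine ⟨vecCT ((jacFull f g p)⁻¹.mulVec c), ?_⟩
  rw [← vecCT_jacFull_mulVec h, Matrix.mulVec_mulVec,
    Matrix.mul_nonsing_inv _ (isUnit_iff_ne_zero.2 hd), Matrix.one_mulVec]

theorem analyticAt_det_jacFull (h : AnalyticAt ℂ (mapCT f g) p) :
    AnalyticAt ℂ (fun q => (jacFull f g q).det) p := by
  refine analyticAt_det_s1 fun i k => ?_
  refine analyticAt_dirD (f := fun q : (Fin n → ℂ) × ℂ =>
    (Fin.snoc (f q.1 q.2) (g q.1 q.2) : Fin (n + 1) → ℂ) i) ?_ (dirCT n k)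
  refine Fin.lastCases ?_ (fun i => ?_) i
  · simpa [Function.comp_def, mapCT] using analyticAt_snd.comp h
  · simpa [Function.comp_def, mapCT] using ((ContinuousLinearMap.proj (R := ℂ) (φ := fun _ : Fin n => ℂ)
      i).analyticAt _).comp (analyticAt_fst.comp h)

end Jacobian

section Main

variable {Q Q' : (Fin n → ℂ) → (Fin n → ℂ) → ℂ → ℂ}
  {f ft : (Fin n → ℂ) → ℂ → Fin n → ℂ} {g gt : (Fin n → ℂ) → ℂ → ℂ}

theorem IsNormalDF.analyticAt (h : IsNormalDF Q) : AnalyticAt ℂ (unc Q) 0 := h.1.self_of_nhds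

theorem IsNormalDF.unc_zero (h : IsNormalDF Q) : unc Q 0 = 0 := h.2.self_of_nhds.1

theorem unc_QBar (Q : (Fin n → ℂ) → (Fin n → ℂ) → ℂ → ℂ) :
    unc (QBar Q) = fun x => star (unc Q (star x)) := rfl

/-- If a Segre preserving map sends a full neighborhood into `ℳ'`, then it is
transversally null. -/
theorem transversallyNull_of_eventually (hQ' : IsNormalDF Q') (hf : ContinuousAt (mapCT f g) 0)
    (hft : ContinuousAt (mapCT ft gt) 0) (hf0 : mapCT f g 0 = 0) (hft0 : mapCT ft gt 0 = 0)
    (h : ∀ᶠ p in 𝓝 (0 : ((Fin n → ℂ) × ℂ) × ((Fin n → ℂ) × ℂ)),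
      g p.1.1 p.1.2 = Q' (f p.1.1 p.1.2) (ft p.2.1 p.2.2) (gt p.2.1 p.2.2)) :
    TransversallyNull g gt ∧
      ∀ᶠ p in 𝓝 (0 : ((Fin n → ℂ) × ℂ) × ((Fin n → ℂ) × ℂ)),
        Q' (f p.1.1 p.1.2) (ft p.2.1 p.2.2) 0 = 0 := by
  have hf00 : f 0 0 = 0 := congrArg Prod.fst hf0
  have hg00 : g 0 0 = 0 := congrArg Prod.snd hf0
  have hft00 : ft 0 0 = 0 := congrArg Prod.fst hft0
  have hgt00 : gt 0 0 = 0 := congrArg Prod.snd hft0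
  have hnull : TransversallyNull g gt := by
    constructor
    · have h1 : Tendsto (fun p : (Fin n → ℂ) × ℂ => (p, (0 : (Fin n → ℂ) × ℂ))) (𝓝 0) (𝓝 0) :=
        (Continuous.prodMk_left _).tendsto' _ _ rfl
      have h2 : Tendsto (fun p : (Fin n → ℂ) × ℂ => ((mapCT f g p).1, (0 : (Fin n → ℂ) × ℂ)))
          (𝓝 0) (𝓝 0) :=
        Tendsto.prodMk_nhds (by simpa [hf0] using hf.fst.tendsto) tendsto_const_nhds
      filter_upwards [h1.eventually h, h2.eventually hQ'.2] with p hp hq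
      have hp' : g p.1 p.2 = Q' (f p.1 p.2) (ft 0 0) (gt 0 0) := hp
      rw [hp', hft00, hgt00]
      exact hq.2
    · have h1 : Tendsto (fun p : (Fin n → ℂ) × ℂ => ((0 : (Fin n → ℂ) × ℂ), p)) (𝓝 0) (𝓝 0) :=
        (Continuous.prodMk_right _).tendsto' _ _ rfl
      have h2 : Tendsto (fun p : (Fin n → ℂ) × ℂ => ((0 : Fin n → ℂ), mapCT ft gt p))
          (𝓝 0) (𝓝 0) :=
        Tendsto.prodMk_nhds tendsto_const_nhds (by simpa [hft0] using hft.tendsto)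
      filter_upwards [h1.eventually h, h2.eventually hQ'.2] with p hp hq
      have hp' : g 0 0 = Q' (f 0 0) (ft p.1 p.2) (gt p.1 p.2) := hp
      rw [hf00, hg00] at hp'
      exact (hq.1.symm.trans hp'.symm)
  refine ⟨hnull, ?_⟩
  have h1 : Tendsto (fun p : ((Fin n → ℂ) × ℂ) × ((Fin n → ℂ) × ℂ) => p.1) (𝓝 0) (𝓝 0) :=
    continuous_fst.tendsto _
  have h2 : Tendsto (fun p : ((Fin n → ℂ) × ℂ) × ((Fin n → ℂ) × ℂ) => p.2) (𝓝 0) (𝓝 0) :=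
    continuous_snd.tendsto _
  filter_upwards [h, h1.eventually hnull.1, h2.eventually hnull.2] with p hp hg hgt
  rwa [hg, hgt, eq_comm] at hp

theorem fderiv_defect {H Ht : (Fin n → ℂ) × ℂ → (Fin n → ℂ) × ℂ}
    {S : (Fin n → ℂ) × ((Fin n → ℂ) × ℂ) → ℂ} {y : (Fin n → ℂ) × ℂ × ((Fin n → ℂ) × ℂ)}
    (hH : DifferentiableAt ℂ H (y.1, y.2.1)) (hHt : DifferentiableAt ℂ Ht y.2.2)
    (hS : DifferentiableAt ℂ S ((H (y.1, y.2.1)).1, Ht y.2.2))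
    (u : Fin n → ℂ) (s : ℂ) (v : (Fin n → ℂ) × ℂ) :
    fderiv ℂ (fun y : (Fin n → ℂ) × ℂ × ((Fin n → ℂ) × ℂ) =>
        (H (y.1, y.2.1)).2 - S ((H (y.1, y.2.1)).1, Ht y.2.2)) y (u, s, v) =
      (fderiv ℂ H (y.1, y.2.1) (u, s)).2 -
        fderiv ℂ S ((H (y.1, y.2.1)).1, Ht y.2.2)
          ((fderiv ℂ H (y.1, y.2.1) (u, s)).1, fderiv ℂ Ht y.2.2 v) := by
  have e1 : HasFDerivAt (fun y : (Fin n → ℂ) × ℂ × ((Fin n → ℂ) × ℂ) => H (y.1, y.2.1)) _ y :=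
    hH.hasFDerivAt.comp (f := fun y : (Fin n → ℂ) × ℂ × ((Fin n → ℂ) × ℂ) => (y.1, y.2.1)) y
      (hasFDerivAt_fst.prodMk (hasFDerivAt_fst.comp y hasFDerivAt_snd))
  have e2 : HasFDerivAt (fun y : (Fin n → ℂ) × ℂ × ((Fin n → ℂ) × ℂ) => Ht y.2.2) _ y :=
    hHt.hasFDerivAt.comp (f := fun y : (Fin n → ℂ) × ℂ × ((Fin n → ℂ) × ℂ) => y.2.2) y
      (hasFDerivAt_snd.comp y hasFDerivAt_snd)
  have e3 := hS.hasFDerivAt.comp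
    (f := fun y : (Fin n → ℂ) × ℂ × ((Fin n → ℂ) × ℂ) => ((H (y.1, y.2.1)).1, Ht y.2.2)) y
      (e1.fst.prodMk e2)
  exact congrArg (fun T => T (u, s, v)) (e1.snd.sub e3).fderiv

theorem eventually_of_slice_zero {Θ : (Fin n → ℂ) × ℂ → ℂ} (hQ : IsNormalDF Q)
    (h : ∀ᶠ x in 𝓝 (0 : (Fin n → ℂ) × ((Fin n → ℂ) × ℂ)), Θ (x.1, unc Q x) = 0) :
    ∀ᶠ p in 𝓝 0, Θ p = 0 := by
  have ht : Tendsto (fun p : (Fin n → ℂ) × ℂ => (p.1, ((0 : Fin n → ℂ), p.2))) (𝓝 0) (𝓝 0) :=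
    Continuous.tendsto' (by fun_prop) _ _ rfl
  filter_upwards [ht.eventually h, ht.eventually hQ.2] with p hp hq
  have e : unc Q (p.1, 0, p.2) = p.2 := hq.2
  rwa [e] at hp

theorem holNondeg_of_generic_det (hQ : IsNormalDF Q) (hQ' : IsNormalDF Q') (hM : HolNondeg Q)
    (hf : AnalyticAt ℂ (mapCT f g) 0) (hft : AnalyticAt ℂ (mapCT ft gt) 0)
    (hf0 : mapCT f g 0 = 0) (hft0 : mapCT ft gt 0 = 0)
    (hH : ∀ᶠ x in 𝓝 (0 : (Fin n → ℂ) × ((Fin n → ℂ) × ℂ)),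
      (mapCT f g (x.1, unc Q x)).2 - unc Q' ((mapCT f g (x.1, unc Q x)).1, mapCT ft gt x.2) = 0)
    (hd : ¬ ∀ᶠ p in 𝓝 (0 : (Fin n → ℂ) × ℂ), (jacFull f g p).det = 0)
    (hdt : ¬ ∀ᶠ p in 𝓝 (0 : (Fin n → ℂ) × ℂ), (jacFull ft gt p).det = 0) : HolNondeg Q' := by
  by_contra hcon
  obtain ⟨r, hr, hdeg⟩ := exists_degenerate_of_not_holNondeg hQ'.analyticAt hcon
  set H := mapCT f g
  set Ht := mapCT ft gt
  set G : (Fin n → ℂ) × ℂ × ((Fin n → ℂ) × ℂ) → ℂ := fun y =>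
    (H (y.1, y.2.1)).2 - unc Q' ((H (y.1, y.2.1)).1, Ht y.2.2) with hGdef
  have hin : AnalyticAt ℂ (fun y : (Fin n → ℂ) × ℂ × ((Fin n → ℂ) × ℂ) => H (y.1, y.2.1)) 0 :=
    AnalyticAt.comp (g := H) (f := fun y : (Fin n → ℂ) × ℂ × ((Fin n → ℂ) × ℂ) => (y.1, y.2.1)) hf
      (analyticAt_fst.prod (analyticAt_fst.comp analyticAt_snd))
  have hout : AnalyticAt ℂ (fun y : (Fin n → ℂ) × ℂ × ((Fin n → ℂ) × ℂ) => Ht y.2.2) 0 :=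
    AnalyticAt.comp (g := Ht) (f := fun y : (Fin n → ℂ) × ℂ × ((Fin n → ℂ) × ℂ) => y.2.2) hft
      (analyticAt_snd.comp analyticAt_snd)
  have hpair : AnalyticAt ℂ (fun y : (Fin n → ℂ) × ℂ × ((Fin n → ℂ) × ℂ) =>
      ((H (y.1, y.2.1)).1, Ht y.2.2)) 0 := (analyticAt_fst.comp hin).prod hout
  have hpair0 : ((H (0, 0)).1, Ht 0) = (0 : (Fin n → ℂ) × ((Fin n → ℂ) × ℂ)) := by
    rw [hft0, show H (0, 0) = 0 from hf0]; rfl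
  have hG : AnalyticAt ℂ G 0 := (analyticAt_snd.comp hin).sub
    (AnalyticAt.comp_of_eq (g := unc Q') hQ'.analyticAt hpair hpair0)
  have hgr : Tendsto (fun x : (Fin n → ℂ) × ((Fin n → ℂ) × ℂ) => (x.1, unc Q x, x.2)) (𝓝 0)
      (𝓝 0) := by
    refine Tendsto.prodMk_nhds (continuous_fst.tendsto _)
      (Tendsto.prodMk_nhds ?_ (continuous_snd.tendsto _))
    simpa [hQ.unc_zero] using hQ.analyticAt.continuousAt.tendsto
  have hgr1 : Tendsto (fun x : (Fin n → ℂ) × ((Fin n → ℂ) × ℂ) => (x.1, unc Q x)) (𝓝 0) (𝓝 0) :=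
    (Continuous.tendsto' (f := fun y : (Fin n → ℂ) × ℂ × ((Fin n → ℂ) × ℂ) => (y.1, y.2.1))
      (by fun_prop) 0 0 rfl).comp hgr
  have hdH : ∀ᶠ x in 𝓝 (0 : (Fin n → ℂ) × ((Fin n → ℂ) × ℂ)),
      DifferentiableAt ℂ H (x.1, unc Q x) :=
    hgr1.eventually (hf.eventually_analyticAt.mono fun _ h => h.differentiableAt)
  have hdHt : ∀ᶠ p in 𝓝 (0 : (Fin n → ℂ) × ℂ), DifferentiableAt ℂ Ht p :=
    hft.eventually_analyticAt.mono fun _ h => h.differentiableAt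
  have hpt : Tendsto (fun x : (Fin n → ℂ) × ((Fin n → ℂ) × ℂ) =>
      ((H (x.1, unc Q x)).1, Ht x.2)) (𝓝 0) (𝓝 0) := by
    exact Tendsto.comp (hpair.continuousAt.tendsto.trans (congrArg 𝓝 hpair0).le) hgr
  have hdS : ∀ᶠ x in 𝓝 (0 : (Fin n → ℂ) × ((Fin n → ℂ) × ℂ)),
      DifferentiableAt ℂ (unc Q') ((H (x.1, unc Q x)).1, Ht x.2) :=
    hpt.eventually (hQ'.analyticAt.eventually_analyticAt.mono fun _ h => h.differentiableAt)
  have hball : ∀ᶠ x in 𝓝 (0 : (Fin n → ℂ) × ((Fin n → ℂ) × ℂ)),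
      ((H (x.1, unc Q x)).1, Ht x.2) ∈ Metric.ball (0 : Fin n → ℂ) r ×ˢ Metric.ball 0 r :=
    hpt.eventually (prod_mem_nhds (Metric.ball_mem_nhds _ hr) (Metric.ball_mem_nhds _ hr))
  have hGw := transversal_deriv_eq_zero (θ := fun p => (jacFull ft gt p).det) hQ.analyticAt
    hQ.unc_zero (hM.segreNondeg hQ.analyticAt) hG hH (analyticAt_det_jacFull hft) hdt (by
      filter_upwards [hdHt, eventually_curry_swap (hdH.and (hdS.and hball))] with p hp hz hdet
      obtain ⟨v', hv', hv0⟩ := hdeg (Ht p) hz.self_of_nhds.2.2.2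
      obtain ⟨v, rfl⟩ := fderiv_surjective_of_det hp hdet v'
      refine ⟨v, fun hv => hv' (by rw [hv, map_zero]), ?_⟩
      filter_upwards [hz] with z hz
      rw [hGdef, fderiv_defect (y := (z, unc Q (z, p), p)) hz.1 hp hz.2.1 0 0 v]
      have e0 : ((0 : Fin n → ℂ), (0 : ℂ)) = 0 := rfl
      simp only [e0, map_zero, Prod.fst_zero, Prod.snd_zero]
      rw [hv0 _ hz.2.2.1, sub_zero])
  refine hd (eventually_of_slice_zero (Θ := fun p => (jacFull f g p).det) hQ ?_)
  have hdQ : ∀ᶠ x in 𝓝 (0 : (Fin n → ℂ) × ((Fin n → ℂ) × ℂ)), DifferentiableAt ℂ (unc Q) x :=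
    hQ.analyticAt.eventually_analyticAt.mono fun _ h => h.differentiableAt
  have hdG := hgr.eventually (hG.eventually_analyticAt.mono fun _ h => h.differentiableAt)
  have hdHt' := (continuous_snd.tendsto (0 : (Fin n → ℂ) × ((Fin n → ℂ) × ℂ))).eventually hdHt
  filter_upwards [hGw, hdH, hdHt', hdS, hdQ, hdG, hH.eventually_nhds] with x hw h1 h2 h3 h4 h5 h6
  by_contra hdet
  obtain ⟨⟨u, s⟩, hus⟩ := fderiv_surjective_of_det h1 hdet (0, 1)
  have hzero : fderiv ℂ G (x.1, unc Q x, x.2) (u, fderiv ℂ (unc Q) x (u, 0), 0) = 0 := by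
    rw [← hasFDerivAt_on_graph h4 h5 (u, 0)]
    have : (fun x : (Fin n → ℂ) × ((Fin n → ℂ) × ℂ) => G (x.1, unc Q x, x.2)) =ᶠ[𝓝 x]
      fun _ => 0 := h6
    rw [this.fderiv_eq]
    simp
  have hsum : (u, s, (0 : (Fin n → ℂ) × ℂ)) = (u, fderiv ℂ (unc Q) x (u, 0), 0) +
      (s - fderiv ℂ (unc Q) x (u, 0)) • ((0 : Fin n → ℂ), (1 : ℂ), (0 : (Fin n → ℂ) × ℂ)) := by
    simp
  have htot : fderiv ℂ G (x.1, unc Q x, x.2) (u, s, 0) = 0 := by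
    rw [hsum, map_add, map_smul, hzero, hw, smul_zero, add_zero]
  rw [hGdef, fderiv_defect (y := (x.1, unc Q x, x.2)) h1 h2 h3] at htot
  have e0 : ((0 : Fin n → ℂ), (0 : (Fin n → ℂ) × ℂ)) = 0 := rfl
  have hus' : fderiv ℂ H (x.1, unc Q x) (u, s) = (0, 1) := hus
  simp [hus', e0] at htot

theorem exists_det_ne_zero (hQ : IsNormalDF Q)
    (hf : AnalyticAt ℂ (mapCT f g) 0) (hft : AnalyticAt ℂ (mapCT ft gt) 0)
    (hd : ¬ ∀ᶠ p in 𝓝 (0 : (Fin n → ℂ) × ℂ), (jacFull f g p).det = 0)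
    (hdt : ¬ ∀ᶠ p in 𝓝 (0 : (Fin n → ℂ) × ℂ), (jacFull ft gt p).det = 0) :
    ∃ (z₀ : Fin n → ℂ) (w₀ : ℂ) (χ₀ : Fin n → ℂ) (τ₀ : ℂ), w₀ = Q z₀ χ₀ τ₀ ∧
      (jacFull f g (z₀, w₀)).det ≠ 0 ∧ (jacFull ft gt (χ₀, τ₀)).det ≠ 0 := by
  by_contra! hcon
  have hinner : AnalyticAt ℂ (fun x : (Fin n → ℂ) × ((Fin n → ℂ) × ℂ) => (x.1, unc Q x)) 0 :=
    analyticAt_fst.prod hQ.analyticAt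
  have h1 : AnalyticAt ℂ (fun x : (Fin n → ℂ) × ((Fin n → ℂ) × ℂ) =>
      (jacFull f g (x.1, unc Q x)).det) 0 :=
    AnalyticAt.comp (g := fun p => (jacFull f g p).det)
      (by rw [hQ.unc_zero]; exact analyticAt_det_jacFull hf) hinner
  have h2 : AnalyticAt ℂ (fun x : (Fin n → ℂ) × ((Fin n → ℂ) × ℂ) => (jacFull ft gt x.2).det) 0 :=
    AnalyticAt.comp (g := fun p => (jacFull ft gt p).det) (analyticAt_det_jacFull hft)
      analyticAt_snd
  rcases eventually_zero_or_of_mul h1 h2 (.of_forall fun x => by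
    by_cases h : (jacFull f g (x.1, unc Q x)).det = 0
    · rw [h, zero_mul]
    · rw [hcon x.1 _ x.2.1 x.2.2 rfl h, mul_zero]) with h | h
  · exact hd (eventually_of_slice_zero (Θ := fun p => (jacFull f g p).det) hQ h)
  · exact hdt ((eventually_curry_swap (a := 0) (b := 0) h).mono fun p hp => hp.self_of_nhds)

end Main

/-- Theorem 1.2: if `M` is holomorphically nondegenerate at `0`, then either
`ℋ` is transversally null with `Q'(f, f̃, 0) ≡ 0`, or `ℋ` is a biholomorphism near some point
of `ℳ` and `M'` is holomorphically nondegenerate at `0`. -/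
theorem statement1 (n : ℕ) (hn : 1 ≤ n)
    (Q Q' : (Fin n → ℂ) → (Fin n → ℂ) → ℂ → ℂ)
    (hQ : IsRealNormalDF Q) (hQ' : IsRealNormalDF Q')
    (hM : HolNondeg Q)
    (f ft : (Fin n → ℂ) → ℂ → Fin n → ℂ) (g gt : (Fin n → ℂ) → ℂ → ℂ)
    (hH : IsHSPM Q Q' f g ft gt) :
    (TransversallyNull g gt ∧
      ∀ᶠ p in 𝓝 (0 : ((Fin n → ℂ) × ℂ) × ((Fin n → ℂ) × ℂ)),
        Q' (f p.1.1 p.1.2) (ft p.2.1 p.2.2) 0 = 0) ∨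
    ((∃ (z₀ : Fin n → ℂ) (w₀ : ℂ) (χ₀ : Fin n → ℂ) (τ₀ : ℂ),
        w₀ = Q z₀ χ₀ τ₀ ∧
        (jacFull f g (z₀, w₀)).det ≠ 0 ∧ (jacFull ft gt (χ₀, τ₀)).det ≠ 0) ∧
      HolNondeg Q') := by
  obtain ⟨hfa, hga, hfta, hgta, hf0, hg0, hft0, hgt0, hmap⟩ := hH
  have hA : AnalyticAt ℂ (mapCT f g) 0 := hfa.self_of_nhds.prod hga.self_of_nhds
  have hAt : AnalyticAt ℂ (mapCT ft gt) 0 := hfta.self_of_nhds.prod hgta.self_of_nhds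
  have hA0 : mapCT f g 0 = 0 := Prod.ext hf0 hg0
  have hAt0 : mapCT ft gt 0 = 0 := Prod.ext hft0 hgt0
  have hker : ∀ {f : (Fin n → ℂ) → ℂ → Fin n → ℂ} {g : (Fin n → ℂ) → ℂ → ℂ},
      AnalyticAt ℂ (mapCT f g) 0 → (∀ᶠ p in 𝓝 (0 : (Fin n → ℂ) × ℂ), (jacFull f g p).det = 0) →
      ∀ᶠ p in 𝓝 0, ∃ v ≠ 0, fderiv ℂ (mapCT f g) p v = 0 := fun ha h => by
    filter_upwards [ha.eventually_analyticAt, h] with p hp hd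
    exact exists_fderiv_eq_zero_of_det hp.differentiableAt hd
  by_cases hdt : ∀ᶠ p in 𝓝 (0 : (Fin n → ℂ) × ℂ), (jacFull ft gt p).det = 0
  · left
    have hΦ : AnalyticAt ℂ (fun y : (Fin n → ℂ) × ℂ × ((Fin n → ℂ) × ℂ) =>
        (mapCT f g (y.1, y.2.1)).2 - unc Q' ((mapCT f g (y.1, y.2.1)).1, y.2.2)) 0 := by
      have hin : AnalyticAt ℂ
          (fun y : (Fin n → ℂ) × ℂ × ((Fin n → ℂ) × ℂ) => mapCT f g (y.1, y.2.1)) 0 :=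
        AnalyticAt.comp (g := mapCT f g) hA
          (analyticAt_fst.prod (analyticAt_fst.comp analyticAt_snd))
      exact (analyticAt_snd.comp hin).sub (AnalyticAt.comp_of_eq (g := unc Q') hQ'.1.analyticAt
        ((analyticAt_fst.comp hin).prod (analyticAt_snd.comp analyticAt_snd))
        (congrArg (fun a : (Fin n → ℂ) × ℂ => (a.1, (0 : (Fin n → ℂ) × ℂ))) hA0))
    have h := eventually_eq_zero_of_degenerate hQ.1.analyticAt hQ.1.unc_zero
      (hM.segreNondeg hQ.1.analyticAt) hAt hAt0 (hker hAt hdt) hΦ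
      (hmap.mono fun x hx => sub_eq_zero.2 hx)
    have ht : Tendsto (fun p : ((Fin n → ℂ) × ℂ) × ((Fin n → ℂ) × ℂ) => (p.1.1, p.1.2, p.2))
      (𝓝 0) (𝓝 0) := Continuous.tendsto' (by fun_prop) _ _ rfl
    exact transversallyNull_of_eventually hQ'.1 hA.continuousAt hAt.continuousAt hA0 hAt0
      ((ht.eventually h).mono fun p hp => sub_eq_zero.1 hp)
  by_cases hd : ∀ᶠ p in 𝓝 (0 : (Fin n → ℂ) × ℂ), (jacFull f g p).det = 0
  · left
    have hΦ : AnalyticAt ℂ (fun y : (Fin n → ℂ) × ℂ × ((Fin n → ℂ) × ℂ) =>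
        y.2.2.2 - unc Q' (y.2.2.1, mapCT ft gt (y.1, y.2.1))) 0 := by
      have hin : AnalyticAt ℂ
          (fun y : (Fin n → ℂ) × ℂ × ((Fin n → ℂ) × ℂ) => mapCT ft gt (y.1, y.2.1)) 0 :=
        AnalyticAt.comp (g := mapCT ft gt) hAt
          (analyticAt_fst.prod (analyticAt_fst.comp analyticAt_snd))
      have h22 : AnalyticAt ℂ (fun y : (Fin n → ℂ) × ℂ × ((Fin n → ℂ) × ℂ) => y.2.2) 0 :=
        analyticAt_snd.comp analyticAt_snd
      exact (analyticAt_snd.comp h22).sub (AnalyticAt.comp_of_eq (g := unc Q') hQ'.1.analyticAt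
        ((analyticAt_fst.comp h22).prod hin)
        (congrArg (fun a : (Fin n → ℂ) × ℂ => ((0 : Fin n → ℂ), a)) hAt0))
    have hstar : star (0 : (Fin n → ℂ) × ((Fin n → ℂ) × ℂ)) = 0 := star_zero _
    have hB : AnalyticAt ℂ (unc (QBar Q)) 0 := analyticAt_conj (by rw [hstar]; exact hQ.1.analyticAt)
    have hB0 : unc (QBar Q) 0 = 0 := by simp [unc_QBar, hQ.1.unc_zero]
    have hΦ0 : ∀ᶠ x in 𝓝 (0 : (Fin n → ℂ) × ((Fin n → ℂ) × ℂ)), (mapCT f g x.2).2 -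
        unc Q' ((mapCT f g x.2).1, mapCT ft gt (x.1, unc (QBar Q) x)) = 0 := by
      have h1 : Tendsto (fun x : (Fin n → ℂ) × ((Fin n → ℂ) × ℂ) => (x.2.1, x.1, x.2.2))
        (𝓝 0) (𝓝 0) := Continuous.tendsto' (by fun_prop) _ _ rfl
      have h2 : Tendsto (fun x : (Fin n → ℂ) × ((Fin n → ℂ) × ℂ) =>
          (x.2.1, x.1, unc (QBar Q) x)) (𝓝 0) (𝓝 0) := by
        refine Tendsto.prodMk_nhds (Continuous.tendsto' (by fun_prop) _ _ rfl)
          (Tendsto.prodMk_nhds (continuous_fst.tendsto _) ?_)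
        simpa [hB0] using hB.continuousAt.tendsto
      filter_upwards [h1.eventually hQ.2, h2.eventually hmap] with x hx hy
      have e : Q x.2.1 x.1 (unc (QBar Q) x) = x.2.2 := hx
      simp only [e] at hy
      exact sub_eq_zero.2 hy
    have h := eventually_eq_zero_of_degenerate hB hB0
      ((hM.segreNondeg hQ.1.analyticAt).conj hQ.1.analyticAt) hA hA0 (hker hA hd) hΦ hΦ0
    have ht : Tendsto (fun p : ((Fin n → ℂ) × ℂ) × ((Fin n → ℂ) × ℂ) => (p.2.1, p.2.2, p.1))
      (𝓝 0) (𝓝 0) := Continuous.tendsto' (by fun_prop) _ _ rfl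
    exact transversallyNull_of_eventually hQ'.1 hA.continuousAt hAt.continuousAt hA0 hAt0
      ((ht.eventually h).mono fun p hp => sub_eq_zero.1 hp)
  · exact .inr ⟨exists_det_ne_zero hQ.1 hA hAt hd hdt,
      holNondeg_of_generic_det hQ.1 hQ'.1 hM hA hAt hA0 hAt0
        (hmap.mono fun x hx => sub_eq_zero.2 hx) hd hdt⟩

end HSPMpaper
end
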